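/- arXiv:2011.12259 — 7 statements merged into one kernel-verified Lean document; each statement's English description precedes it below -/
import Mathlib

section
/- Every ordinally stable fractional matching of a graph with cardinal preferences is cardinally stable: if M is a fractional matching of an instance (G, sat) such that no edge is ordinally blocking, then no edge is cardinally blocking. -/
open Finset
open scoped Classical

variable {V : Type*}

/-- Two agents find each other acceptable iff at least one of them assigns
positive satisfaction to the other. -/
def Adj (sat : V → V → ℚ) (u v : V) : Prop :=
  0 < sat u v ∨ 0 < sat v u

instance (sat : V → V → ℚ) (u v : V) : Decidable (Adj sat u v) :=
  inferInstanceAs (Decidable (0 < sat u v ∨ 0 < sat v u))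

/-- `sat` describes a valid instance: satisfactions are nonnegative, an agent has
zero satisfaction towards itself, and the acceptability graph has no isolated vertices. -/
structure IsInstance [Fintype V] (sat : V → V → ℚ) : Prop where
  nonneg : ∀ u v, 0 ≤ sat u v
  sat_self : ∀ u, sat u u = 0
  noIsolated : ∀ v, ∃ u, Adj sat v u

/-- `M` is a fractional matching of the acceptability graph of `sat`. -/
structure IsMatching [Fintype V] (sat : V → V → ℚ) (M : V → V → ℝ) : Prop where
  symm : ∀ u v, M u v = M v u
  nonneg : ∀ u v, 0 ≤ M u v
  support : ∀ u v, ¬ Adj sat u v → M u v = 0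
  degree_le_one : ∀ v, ∑ u, M v u ≤ 1

/-- `M(x, ≽ y)`: total matching value of `x` with neighbours liked at least as much as `y`. -/
noncomputable def wge [Fintype V] (sat : V → V → ℚ) (M : V → V → ℝ) (x y : V) : ℝ :=
  ∑ z ∈ Finset.univ.filter (fun z => Adj sat x z ∧ sat x y ≤ sat x z), M x z

/-- `M(x, ≻ y)`: total matching value of `x` with neighbours strictly preferred to `y`. -/
noncomputable def wgt [Fintype V] (sat : V → V → ℚ) (M : V → V → ℝ) (x y : V) : ℝ :=
  ∑ z ∈ Finset.univ.filter (fun z => Adj sat x z ∧ sat x y < sat x z), M x z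

/-- Utility of agent `v` under matching `M`. -/
noncomputable def util [Fintype V] (sat : V → V → ℚ) (M : V → V → ℝ) (v : V) : ℝ :=
  ∑ u, (sat v u : ℝ) * M v u

/-- Social welfare of a matching. -/
noncomputable def welfare [Fintype V] (sat : V → V → ℚ) (M : V → V → ℝ) : ℝ :=
  ∑ v, util sat M v

/-- Ordinal stability: no edge is ordinally blocking. -/
def OrdStable [Fintype V] (sat : V → V → ℚ) (M : V → V → ℝ) : Prop :=
  ∀ u v, Adj sat u v → ¬ (wge sat M u v < 1 ∧ wge sat M v u < 1)

/-- Cardinal stability: no edge is cardinally blocking. -/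
def CardStable [Fintype V] (sat : V → V → ℚ) (M : V → V → ℝ) : Prop :=
  ∀ u v, Adj sat u v → ¬ (util sat M u < (sat u v : ℝ) ∧ util sat M v < (sat v u : ℝ))

/-- Linear stability: no edge is linearly blocking. -/
def LinStable [Fintype V] (sat : V → V → ℚ) (M : V → V → ℝ) : Prop :=
  ∀ u v, Adj sat u v → ¬ (wge sat M u v + wge sat M v u - M u v < 1)

/-- Strict preferences: no ties among distinct neighbours. -/
def StrictPrefs (sat : V → V → ℚ) : Prop :=
  ∀ v x y, Adj sat v x → Adj sat v y → x ≠ y → sat v x ≠ sat v y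

/-- The acceptability graph is bipartite with parts `U` and its complement. -/
def BipartiteWith (sat : V → V → ℚ) (U : Set V) : Prop :=
  ∀ u v, Adj sat u v → (u ∈ U ↔ v ∉ U)

/-- Integral matching. -/
def IntegralMatching (M : V → V → ℝ) : Prop := ∀ u v, M u v = 0 ∨ M u v = 1

/-- Number of fully matched agents. -/
noncomputable def nfully [Fintype V] (M : V → V → ℝ) : ℕ :=
  (Finset.univ.filter (fun v => ∑ u, M v u = (1 : ℝ))).card

/-- A finite weighted form of Markov's inequality: take `s` to be the part of `t` where `c ≤ f`. -/
theorem mul_sum_le_sum_mul_of_subset {ι R : Type*} [Semiring R] [PartialOrder R] [IsOrderedRing R]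
    {s t : Finset ι} {f w : ι → R} {c : R} (hst : s ⊆ t) (hc : ∀ i ∈ s, c ≤ f i)
    (hf : ∀ i ∈ t, i ∉ s → 0 ≤ f i) (hw : ∀ i ∈ t, 0 ≤ w i) :
    c * ∑ i ∈ s, w i ≤ ∑ i ∈ t, f i * w i :=
  calc c * ∑ i ∈ s, w i
    _ = ∑ i ∈ s, c * w i := mul_sum s w c
    _ ≤ ∑ i ∈ s, f i * w i :=
      sum_le_sum fun i hi => mul_le_mul_of_nonneg_right (hc i hi) (hw i (hst hi))
    _ ≤ ∑ i ∈ t, f i * w i :=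
      sum_le_sum_of_subset_of_nonneg hst fun i hit his => mul_nonneg (hf i hit his) (hw i hit)

section NonnegativeWeights

variable [Fintype V] {sat : V → V → ℚ} {M : V → V → ℝ}

theorem sat_mul_wge_le_util {x : V} (hsat : ∀ z, 0 ≤ sat x z) (hM : ∀ z, 0 ≤ M x z) (y : V) :
    (sat x y : ℝ) * wge sat M x y ≤ util sat M x :=
  mul_sum_le_sum_mul_of_subset (filter_subset _ _)
    (fun _ hz => Rat.cast_le.mpr (mem_filter.mp hz).2.2)
    (fun z _ _ => Rat.cast_nonneg.mpr (hsat z)) (fun z _ => hM z)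

theorem wge_lt_one_of_util_lt_sat {x y : V} (hsat : ∀ z, 0 ≤ sat x z) (hM : ∀ z, 0 ≤ M x z)
    (h : util sat M x < sat x y) : wge sat M x y < 1 := by
  have hlt : (sat x y : ℝ) * wge sat M x y < sat x y * 1 := by
    rw [mul_one]
    exact (sat_mul_wge_le_util hsat hM y).trans_lt h
  exact lt_of_mul_lt_mul_left hlt (Rat.cast_nonneg.mpr (hsat y))

theorem ordinallyStable_implies_cardinallyStable_general (hsat : ∀ u v, 0 ≤ sat u v)
    (hM : ∀ u v, 0 ≤ M u v) (hOS : OrdStable sat M) : CardStable sat M :=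
  fun u v huv ⟨hu, hv⟩ => hOS u v huv
    ⟨wge_lt_one_of_util_lt_sat (hsat u) (hM u) hu, wge_lt_one_of_util_lt_sat (hsat v) (hM v) hv⟩

end NonnegativeWeights

/-- Every ordinally stable fractional matching is cardinally stable. -/
theorem ordinallyStable_implies_cardinallyStable [Fintype V]
    (sat : V → V → ℚ) (hinst : IsInstance sat)
    (M : V → V → ℝ) (hM : IsMatching sat M) (hOS : OrdStable sat M) :
    CardStable sat M :=
  ordinallyStable_implies_cardinallyStable_general hinst.nonneg hM.nonneg hOS
end

section
/- There exists a graph G with strict cardinal preferences sat such that (G, sat) admits a linearly stable fractional matching that is neither ordinally stable nor cardinally stable, and (G, sat) also admits a cardinally stable fractional matching that is neither linearly stable nor ordinally stable. -/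
open Finset
open scoped Classical

variable {V : Type*}

/-!
Linear stability is a system of linear inequalities in the matching, so a convex combination of
stable integral matchings is linearly stable; ordinal and cardinal stability are not preserved by
convex combinations. In the hexagon with its three long diagonals, let every agent rank the next
corner, the opposite one and the previous one with satisfactions `4`, `3` and `1`. The two perfect
matchings of the hexagon by sides are stable, one being best for the even corners and the other for
the odd ones.

* In their average both ends of a diagonal have weight `1 / 2` on better partners and utility
  `(4 + 1) / 2 < 3`, so diagonals block ordinally and cardinally.
* With weights `3 / 4` and `1 / 8` instead, the even corners have utility `25 / 8 ≥ 3`, hence block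
  no diagonal, and the odd corners have utility `5 / 4`, so no agent blocks a side it values `1`.
  Each side has such an end, so the matching is cardinally stable. As no agent is saturated, it is
  not linearly stable: an agent and its favourite partner form a blocking edge. Both ends of a
  diagonal still have weight less than `1` on better partners, so it blocks ordinally.
-/

lemma Adj.symm {sat : V → V → ℚ} {u v : V} (huv : Adj sat u v) : Adj sat v u :=
  Or.symm huv

section Linearity

variable [Fintype V] (sat : V → V → ℚ) (M N : V → V → ℝ) (a : ℝ)

lemma wge_add (x y : V) : wge sat (M + N) x y = wge sat M x y + wge sat N x y :=
  Finset.sum_add_distrib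

lemma wge_smul (x y : V) : wge sat (a • M) x y = a * wge sat M x y :=
  (Finset.mul_sum _ _ _).symm

lemma util_add (v : V) : util sat (M + N) v = util sat M v + util sat N v := by
  simp only [util, Pi.add_apply, mul_add, Finset.sum_add_distrib]

lemma util_smul (v : V) : util sat (a • M) v = a * util sat M v := by
  simp only [util, Pi.smul_apply, smul_eq_mul, Finset.mul_sum, mul_left_comm]

end Linearity

section Stability

variable [Fintype V] {sat : V → V → ℚ} {M N : V → V → ℝ} {a b : ℝ}

lemma IsMatching.smul_add_smul (hM : IsMatching sat M) (hN : IsMatching sat N)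
    (ha : 0 ≤ a) (hb : 0 ≤ b) (hab : a + b ≤ 1) : IsMatching sat (a • M + b • N) where
  symm u v := by
    simp only [Pi.add_apply, Pi.smul_apply, hM.symm u v, hN.symm u v]
  nonneg u v := add_nonneg (mul_nonneg ha (hM.nonneg u v)) (mul_nonneg hb (hN.nonneg u v))
  support u v huv := by
    simp only [Pi.add_apply, Pi.smul_apply, hM.support u v huv, hN.support u v huv, smul_zero,
      add_zero]
  degree_le_one v := calc
    ∑ u, (a • M + b • N) v u = a * ∑ u, M v u + b * ∑ u, N v u := by
      simp only [Pi.add_apply, Pi.smul_apply, smul_eq_mul, Finset.sum_add_distrib, Finset.mul_sum]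
    _ ≤ a * 1 + b * 1 := add_le_add
      (mul_le_mul_of_nonneg_left (hM.degree_le_one v) ha)
      (mul_le_mul_of_nonneg_left (hN.degree_le_one v) hb)
    _ ≤ 1 := by linarith

lemma convex_setOf_linStable (sat : V → V → ℚ) : Convex ℝ {M | LinStable sat M} := by
  intro M hM N hN a b ha hb hab u v huv
  have hMuv : 1 ≤ wge sat M u v + wge sat M v u - M u v := not_lt.mp (hM u v huv)
  have hNuv : 1 ≤ wge sat N u v + wge sat N v u - N u v := not_lt.mp (hN u v huv)
  simp only [wge_add, wge_smul, Pi.add_apply, Pi.smul_apply, smul_eq_mul, not_lt]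
  linarith [mul_le_mul_of_nonneg_left hMuv ha, mul_le_mul_of_nonneg_left hNuv hb]

lemma IsMatching.le_wge (hM : IsMatching sat M) {u v z : V} (hz : Adj sat u z)
    (hvz : sat u v ≤ sat u z) : M u z ≤ wge sat M u v :=
  Finset.single_le_sum (f := M u) (fun w _ => hM.nonneg u w)
    (Finset.mem_filter.mpr ⟨Finset.mem_univ z, hz, hvz⟩)

lemma IsMatching.wge_le_degree (hM : IsMatching sat M) (u v : V) :
    wge sat M u v ≤ ∑ z, M u z :=
  Finset.sum_le_univ_sum_of_nonneg (hM.nonneg u)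

lemma OrdStable.linStable (h : OrdStable sat M) (hM : IsMatching sat M) : LinStable sat M := by
  intro u v huv hblock
  have hu : M u v ≤ wge sat M u v := hM.le_wge huv le_rfl
  have hv : M u v ≤ wge sat M v u := hM.symm u v ▸ hM.le_wge huv.symm le_rfl
  exact h u v huv ⟨by linarith, by linarith⟩

lemma LinStable.one_le_degree_of_top (h : LinStable sat M) (hM : IsMatching sat M) {u v : V}
    (huv : Adj sat u v) (htop : ∀ z, Adj sat u z → z ≠ v → sat u z < sat u v) :
    1 ≤ ∑ z, M v z := by
  have hu : wge sat M u v = M u v := by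
    refine Finset.sum_eq_single_of_mem v (by simp [huv]) fun z hz hzv => ?_
    obtain ⟨-, hadj, hle⟩ := Finset.mem_filter.mp hz
    exact absurd hle (htop z hadj hzv).not_ge
  have hstable : 1 ≤ wge sat M u v + wge sat M v u - M u v := not_lt.mp (h u v huv)
  linarith [hM.wge_le_degree v u]

end Stability

section Pairings

/-- The integral matching in which each agent `v` is matched to `σ v`. It is a matching only when
`σ` is an involution along acceptable edges. -/
noncomputable def pairing (σ : V → V) (u v : V) : ℝ :=
  if v = σ u then 1 else 0

/-- Perfect stable matchings in the sense of Gale and Shapley, encoded by the map `σ` sending each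
agent to its partner: one end of every edge likes its partner at least as much as the other end. -/
structure IsPerfectStable (sat : V → V → ℚ) (σ : V → V) : Prop where
  involutive : Function.Involutive σ
  adj : ∀ v, Adj sat v (σ v)
  stable : ∀ u v, Adj sat u v → sat u v ≤ sat u (σ u) ∨ sat v u ≤ sat v (σ v)

variable [Fintype V] {sat : V → V → ℚ} {σ τ : V → V}

lemma sum_pairing (σ : V → V) (v : V) : ∑ u, pairing σ v u = 1 := by
  simp [pairing]

lemma util_pairing (sat : V → V → ℚ) (σ : V → V) (v : V) :
    util sat (pairing σ) v = sat v (σ v) := by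
  simp [util, pairing]

lemma wge_pairing {x y : V} (hx : Adj sat x (σ x)) :
    wge sat (pairing σ) x y = if sat x y ≤ sat x (σ x) then 1 else 0 := by
  simp [wge, pairing, hx]

namespace IsPerfectStable

lemma isMatching (hσ : IsPerfectStable sat σ) : IsMatching sat (pairing σ) where
  symm u v := by
    simp only [pairing, hσ.involutive.eq_iff.symm.trans eq_comm]
  nonneg u v := by
    unfold pairing
    positivity
  support u v huv := by
    refine if_neg ?_
    rintro rfl
    exact huv (hσ.adj u)
  degree_le_one v := (sum_pairing σ v).le

lemma ordStable (hσ : IsPerfectStable sat σ) : OrdStable sat (pairing σ) := by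
  rintro u v huv ⟨hu, hv⟩
  rw [wge_pairing (hσ.adj _)] at hu hv
  rcases hσ.stable u v huv with h | h
  · simp [h] at hu
  · simp [h] at hv

lemma linStable (hσ : IsPerfectStable sat σ) : LinStable sat (pairing σ) :=
  hσ.ordStable.linStable hσ.isMatching

end IsPerfectStable

lemma not_ordStable_smul_pairing_add_smul_pairing (hσ : ∀ v, Adj sat v (σ v))
    (hτ : ∀ v, Adj sat v (τ v)) {a b : ℝ} (ha : a < 1) (hb : b < 1) {u v : V}
    (huv : Adj sat u v) (hu : sat u (τ u) < sat u v) (hv : sat v (σ v) < sat v u) :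
    ¬ OrdStable sat (a • pairing σ + b • pairing τ) := by
  refine fun h => h u v huv ⟨?_, ?_⟩
  · rw [wge_add, wge_smul, wge_smul, wge_pairing (hσ u), wge_pairing (hτ u), if_neg hu.not_ge]
    split_ifs <;> linarith
  · rw [wge_add, wge_smul, wge_smul, wge_pairing (hσ v), wge_pairing (hτ v), if_neg hv.not_ge]
    split_ifs <;> linarith

end Pairings

section Hexagon

/-- The complete bipartite instance between the even and the odd corners of a hexagon. Every agent
prefers the next corner to the opposite one and the opposite one to the previous one. Subtraction
in `Fin 6` is modulo `6`. -/
def hexSat (u v : Fin 6) : ℚ :=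
  ![0, 4, 0, 3, 0, 1] (v - u)

/-- The perfect matching of the hexagon consisting of the sides `{0, 1}`, `{2, 3}` and `{4, 5}`,
best for the even corners and worst for the odd ones. -/
def evenPartner (v : Fin 6) : Fin 6 :=
  if Even v.val then v + 1 else v - 1

/-- The perfect matching of the hexagon consisting of the sides `{1, 2}`, `{3, 4}` and `{5, 0}`,
best for the odd corners and worst for the even ones. -/
def oddPartner (v : Fin 6) : Fin 6 :=
  if Even v.val then v - 1 else v + 1

/-- Weights `a` and `b`, alternately, on the sides of the hexagon. -/
noncomputable def hexMix (a b : ℝ) : Fin 6 → Fin 6 → ℝ :=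
  a • pairing evenPartner + b • pairing oddPartner

lemma isInstance_hexSat : IsInstance hexSat :=
  ⟨by decide +kernel, by decide +kernel, by decide +kernel⟩

lemma strictPrefs_hexSat : StrictPrefs hexSat := by
  unfold StrictPrefs
  decide +kernel

lemma isPerfectStable_evenPartner : IsPerfectStable hexSat evenPartner :=
  ⟨by unfold Function.Involutive; decide +kernel, by decide +kernel, by decide +kernel⟩

lemma isPerfectStable_oddPartner : IsPerfectStable hexSat oddPartner :=
  ⟨by unfold Function.Involutive; decide +kernel, by decide +kernel, by decide +kernel⟩

lemma hexSat_evenPartner (v : Fin 6) : hexSat v (evenPartner v) = if Even v.val then 4 else 1 := by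
  decide +kernel +revert

lemma hexSat_oddPartner (v : Fin 6) : hexSat v (oddPartner v) = if Even v.val then 1 else 4 := by
  decide +kernel +revert

lemma hexSat_le_one_or_eq_opposite (u v : Fin 6) :
    hexSat u v ≤ 1 ∨ hexSat v u ≤ 1 ∨ v = u + 3 := by
  decide +kernel +revert

lemma hexSat_opposite (u : Fin 6) : hexSat u (u + 3) = 3 ∧ hexSat (u + 3) u = 3 := by
  decide +kernel +revert

lemma even_or_even_opposite (u : Fin 6) : Even u.val ∨ Even (u + 3).val := by
  decide +revert

variable {a b : ℝ}

lemma isMatching_hexMix (ha : 0 ≤ a) (hb : 0 ≤ b) (hab : a + b ≤ 1) :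
    IsMatching hexSat (hexMix a b) :=
  isPerfectStable_evenPartner.isMatching.smul_add_smul isPerfectStable_oddPartner.isMatching
    ha hb hab

lemma sum_hexMix (a b : ℝ) (v : Fin 6) : ∑ u, hexMix a b v u = a + b := by
  simp only [hexMix, Pi.add_apply, Pi.smul_apply, smul_eq_mul, Finset.sum_add_distrib,
    ← Finset.mul_sum, sum_pairing, mul_one]

lemma util_hexMix (a b : ℝ) (v : Fin 6) :
    util hexSat (hexMix a b) v = if Even v.val then 4 * a + b else a + 4 * b := by
  rw [hexMix, util_add, util_smul, util_smul, util_pairing, util_pairing, hexSat_evenPartner,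
    hexSat_oddPartner]
  split_ifs <;> push_cast <;> ring

lemma linStable_hexMix (ha : 0 ≤ a) (hb : 0 ≤ b) (hab : a + b = 1) :
    LinStable hexSat (hexMix a b) :=
  convex_setOf_linStable hexSat isPerfectStable_evenPartner.linStable
    isPerfectStable_oddPartner.linStable ha hb hab

lemma not_ordStable_hexMix (ha : a < 1) (hb : b < 1) : ¬ OrdStable hexSat (hexMix a b) :=
  not_ordStable_smul_pairing_add_smul_pairing isPerfectStable_evenPartner.adj
    isPerfectStable_oddPartner.adj ha hb (u := 0) (v := 3)
    (by decide +kernel) (by decide +kernel) (by decide +kernel)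

lemma not_linStable_hexMix (ha : 0 ≤ a) (hb : 0 ≤ b) (hab : a + b < 1) :
    ¬ LinStable hexSat (hexMix a b) := by
  intro h
  have hdegree : 1 ≤ ∑ z, hexMix a b 1 z :=
    h.one_le_degree_of_top (isMatching_hexMix ha hb hab.le) (u := 0) (by decide +kernel)
      (by decide +kernel)
  exact hab.not_ge (sum_hexMix a b 1 ▸ hdegree)

lemma cardStable_hexMix (heven : 3 ≤ 4 * a + b) (hodd : 1 ≤ a + 4 * b) :
    CardStable hexSat (hexMix a b) := by
  have hutil_one (v : Fin 6) : 1 ≤ util hexSat (hexMix a b) v := by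
    rw [util_hexMix]
    split_ifs <;> linarith
  have hutil_even {v : Fin 6} (hv : Even v.val) : 3 ≤ util hexSat (hexMix a b) v := by
    rwa [util_hexMix, if_pos hv]
  rintro u v - ⟨hu, hv⟩
  rcases hexSat_le_one_or_eq_opposite u v with h | h | rfl
  · exact (hu.trans_le (by exact_mod_cast h)).not_ge (hutil_one u)
  · exact (hv.trans_le (by exact_mod_cast h)).not_ge (hutil_one v)
  · rw [(hexSat_opposite u).1, Rat.cast_ofNat] at hu
    rw [(hexSat_opposite u).2, Rat.cast_ofNat] at hv
    exact (even_or_even_opposite u).elim (fun h => hu.not_ge (hutil_even h))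
      fun h => hv.not_ge (hutil_even h)

lemma not_cardStable_hexMix (heven : 4 * a + b < 3) (hodd : a + 4 * b < 3) :
    ¬ CardStable hexSat (hexMix a b) := by
  have hutil (v : Fin 6) : util hexSat (hexMix a b) v < 3 := by
    rw [util_hexMix]
    split_ifs <;> assumption
  intro h
  refine h 0 (0 + 3) (by decide +kernel) ⟨?_, ?_⟩
  · rw [(hexSat_opposite 0).1]
    exact_mod_cast hutil 0
  · rw [(hexSat_opposite 0).2]
    exact_mod_cast hutil (0 + 3)

end Hexagon

/-- There is an instance with strict preferences admitting a linearly stable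
matching that is neither ordinally nor cardinally stable, and a cardinally stable matching
that is neither linearly nor ordinally stable. -/
theorem exists_instance_LSM_not_OSM_CSM_and_CSM_not_LSM_OSM :
    ∃ (n : ℕ) (sat : Fin n → Fin n → ℚ),
      IsInstance sat ∧ StrictPrefs sat ∧
      (∃ M : Fin n → Fin n → ℝ, IsMatching sat M ∧ LinStable sat M ∧
        ¬ OrdStable sat M ∧ ¬ CardStable sat M) ∧
      (∃ M : Fin n → Fin n → ℝ, IsMatching sat M ∧ CardStable sat M ∧
        ¬ LinStable sat M ∧ ¬ OrdStable sat M) := by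
  refine ⟨6, hexSat, isInstance_hexSat, strictPrefs_hexSat,
    ⟨hexMix (1 / 2) (1 / 2), ?_, ?_, ?_, ?_⟩, ⟨hexMix (3 / 4) (1 / 8), ?_, ?_, ?_, ?_⟩⟩
  · exact isMatching_hexMix (by norm_num) (by norm_num) (by norm_num)
  · exact linStable_hexMix (by norm_num) (by norm_num) (by norm_num)
  · exact not_ordStable_hexMix (by norm_num) (by norm_num)
  · exact not_cardStable_hexMix (by norm_num) (by norm_num)
  · exact isMatching_hexMix (by norm_num) (by norm_num) (by norm_num)
  · exact cardStable_hexMix (by norm_num) (by norm_num)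
  · exact not_linStable_hexMix (by norm_num) (by norm_num) (by norm_num)
  · exact not_ordStable_hexMix (by norm_num) (by norm_num)
end

section
/- Every graph with cardinal preferences (possibly with ties) admits an ordinally stable fractional matching M that is half-integral and in which every matched agent is fully matched; in particular, such an M is also cardinally stable. -/
open Finset
open scoped Classical

variable {V : Type*}

/-!
Breaking ties arbitrarily, assume that preferences are strict.  Irving's algorithm for stable
roommates thins the acceptability graph, always deleting edges that some agent rejects because it
holds a better proposal; here its end result is replaced by an inclusion-minimal graph `T` all of
whose missing edges are rejected.  Truncating the lists of receivers of proposals that survive as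
first choices preserves this property, so by minimality it deletes nothing.

* Truncating along a single first choice shows that `u` is the last choice of its first choice.
  Hence "first choice" is a permutation `π`, and its inverse is "last choice".
* Let `next` send `x` to the last choice of its second choice, and let `C` be a set of agents with
  at least two choices that `next` permutes.  If the proposals of `C` to second choices all
  survived, truncating along them would delete first choices, contradicting minimality.  So some
  proposal fails; this propagates backwards along `next` and forces all lists in `C` to have length
  two (Tan's odd parties).
* Every agent with at least two choices belongs to such a `C`, so no list has more than two entries.

The cycles of `π` now consist of edges of `T`, and putting weight one half on each step of each
cycle gives the matching.
-/

lemma exists_iterate_mem_periodicPts {β : Type*} [Finite β] (g : β → β) (x : β) :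
    ∃ k, g^[k] x ∈ Function.periodicPts g := by
  obtain ⟨m, n, hmn, heq⟩ := Finite.exists_ne_map_eq_of_infinite fun k => g^[k] x
  wlog hlt : m < n generalizing m n
  · exact this n m hmn.symm heq.symm (by lia)
  refine ⟨m, Function.mk_mem_periodicPts (Nat.sub_pos_of_lt hlt) ?_⟩
  rw [Function.IsPeriodicPt, Function.IsFixedPt, ← Function.iterate_add_apply,
    Nat.sub_add_cancel hlt.le]
  exact heq.symm

section Partition

variable {α : Type*}

/-- In the partition of the agents into cycles of `π`, the agent `u` lies on a nontrivial cycle and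
likes both its successor and its predecessor at least as much as `v`. -/
def IsSatisfied [LE α] (p : V → V → α) (π : Equiv.Perm V) (u v : V) : Prop :=
  π u ≠ u ∧ p u v ≤ p u (π u) ∧ p u v ≤ p u (π.symm u)

/-- Tan's stable partitions of a graph whose vertices compare their neighbours by `p` (larger is
better).  A partition into cycles is encoded by a permutation whose fixed points are the single
agents. -/
structure IsStablePartition [LE α] (G : SimpleGraph V) (p : V → V → α) (π : Equiv.Perm V) :
    Prop where
  adj : ∀ u, π u ≠ u → G.Adj u (π u)
  isSatisfied : ∀ u v, G.Adj u v → IsSatisfied p π u v ∨ IsSatisfied p π v u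

lemma IsStablePartition.of_refinement {β : Type*} [LE α] [LE β] {G : SimpleGraph V}
    {p : V → V → α} {q : V → V → β} {π : Equiv.Perm V} (hπ : IsStablePartition G q π)
    (hqp : ∀ v x y, q v x ≤ q v y → p v x ≤ p v y) : IsStablePartition G p π where
  adj := hπ.adj
  isSatisfied u v huv :=
    (hπ.isSatisfied u v huv).imp (fun h => ⟨h.1, hqp _ _ _ h.2.1, hqp _ _ _ h.2.2⟩)
      (fun h => ⟨h.1, hqp _ _ _ h.2.1, hqp _ _ _ h.2.2⟩)

lemma exists_strict_refinement [Countable V] [Preorder α] (p : V → V → α) :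
    ∃ r : V → V ↪ α ×ₗ ℕ, ∀ v x y, r v x ≤ r v y → p v x ≤ p v y := by
  obtain ⟨e, he⟩ := exists_injective_nat V
  refine ⟨fun v => ⟨fun x => toLex (p v x, e x), fun x y hxy => ?_⟩, fun v x y hxy => ?_⟩
  · exact he (congrArg (fun a => (ofLex a).2) hxy)
  · exact (Prod.Lex.le_iff.mp hxy).elim le_of_lt fun h => h.1.le

end Partition

/-! ### Preference tables -/

section Table

variable {α : Type*} [LinearOrder α] {G T : SimpleGraph V} {r : V → V ↪ α} {C : Set V} {p : V → V}
  {u v w x : V}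

/-- `v` is the best entry in the list of `u`, that is, among the neighbours of `u` in `T`, where
larger values of `r u` are better. -/
def IsFirstChoice (r : V → V ↪ α) (T : SimpleGraph V) (u v : V) : Prop :=
  T.Adj u v ∧ ∀ w, T.Adj u w → r u w ≤ r u v

lemma IsFirstChoice.unique (hv : IsFirstChoice r T u v) (hw : IsFirstChoice r T u w) : v = w :=
  (r u).injective (le_antisymm (hw.2 v hv.1) (hv.2 w hw.1))

/-- If all agents propose to their first choices in `T`, then `u` receives a proposal that it
prefers to `v`. -/
def Rejects (r : V → V ↪ α) (T : SimpleGraph V) (u v : V) : Prop :=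
  ∃ t, IsFirstChoice r T t u ∧ r u v < r u t

/-- A subgraph of `G`, thought of as the family of lists of neighbours, such that every edge of `G`
missing from it is rejected by one of its endpoints. -/
structure IsPreferenceTable (G : SimpleGraph V) (r : V → V ↪ α) (T : SimpleGraph V) : Prop where
  le : T ≤ G
  rejects : ∀ u v, G.Adj u v → ¬ T.Adj u v → Rejects r T u v ∨ Rejects r T v u

lemma isPreferenceTable_self (G : SimpleGraph V) (r : V → V ↪ α) : IsPreferenceTable G r G :=
  ⟨le_rfl, fun _ _ h h' => absurd h h'⟩

/-- The table left when every `x ∈ C` proposes to `p x` and every agent deletes the entries that it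
likes less than one of its proposers. -/
def truncate (r : V → V ↪ α) (T : SimpleGraph V) (C : Set V) (p : V → V) : SimpleGraph V where
  Adj u v := T.Adj u v ∧ (∀ x ∈ C, p x = u → r u x ≤ r u v) ∧ ∀ x ∈ C, p x = v → r v x ≤ r v u
  symm := ⟨fun _ _ h => ⟨h.1.symm, h.2.2, h.2.1⟩⟩
  loopless := ⟨fun _ h => h.1.ne rfl⟩

lemma truncate_le : truncate r T C p ≤ T := fun _ _ h => h.1

lemma rejects_truncate (hp : ∀ x ∈ C, IsFirstChoice r (truncate r T C p) x (p x))
    (h : Rejects r T u v) : Rejects r (truncate r T C p) u v := by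
  obtain ⟨t, htu, hvt⟩ := h
  by_cases hbest : ∀ x ∈ C, p x = u → r u x ≤ r u t
  · have htu' : (truncate r T C p).Adj t u := by
      refine ⟨htu.1, ?_, hbest⟩
      rintro x hx rfl
      exact htu.2 x (hp x hx).1.1.symm
    exact ⟨t, ⟨htu', fun w hw => htu.2 w hw.1⟩, hvt⟩
  · push Not at hbest
    obtain ⟨x, hx, rfl, htx⟩ := hbest
    exact ⟨x, hp x hx, hvt.trans htx⟩

lemma isPreferenceTable_truncate (hT : IsPreferenceTable G r T)
    (hp : ∀ x ∈ C, IsFirstChoice r (truncate r T C p) x (p x)) :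
    IsPreferenceTable G r (truncate r T C p) := by
  refine ⟨truncate_le.trans hT.le, fun u v hG hcut => ?_⟩
  by_cases hTuv : T.Adj u v
  · have hdeleted : (∃ x ∈ C, p x = u ∧ r u v < r u x) ∨ ∃ x ∈ C, p x = v ∧ r v u < r v x := by
      by_contra! hkept
      exact hcut ⟨hTuv, hkept⟩
    refine hdeleted.imp ?_ ?_
    all_goals
      rintro ⟨x, hx, rfl, hlt⟩
      exact ⟨x, hp x hx, hlt⟩
  · exact (hT.rejects u v hG hTuv).imp (rejects_truncate hp) (rejects_truncate hp)

lemma le_truncate_of_minimal (hT : Minimal (IsPreferenceTable G r) T)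
    (hp : ∀ x ∈ C, IsFirstChoice r (truncate r T C p) x (p x)) : T ≤ truncate r T C p :=
  hT.le_of_le (isPreferenceTable_truncate hT.prop hp) truncate_le

lemma IsFirstChoice.le_of_minimal (huv : IsFirstChoice r T u v)
    (hT : Minimal (IsPreferenceTable G r) T) (hvw : T.Adj v w) : r v u ≤ r v w := by
  have hp : ∀ x ∈ ({u} : Set V), IsFirstChoice r (truncate r T {u} fun _ => v) x v := by
    rintro x rfl
    refine ⟨⟨huv.1, ?_, ?_⟩, fun w hw => huv.2 w hw.1⟩
    · rintro y rfl hvy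
      exact absurd hvy huv.1.ne'
    · rintro y rfl -
      exact le_rfl
  exact (le_truncate_of_minimal hT hp hvw).2.1 u rfl rfl

/-! ### First, second and last choices -/

/-- The best entry in the list of `u`; by convention `u` itself if there is none, so that first
choices can form a permutation of all agents. -/
noncomputable def firstChoice (r : V → V ↪ α) (T : SimpleGraph V) (u : V) : V :=
  if h : ∃ v, IsFirstChoice r T u v then h.choose else u

/-- The best entry in the list of `u` other than its first choice, and `u` itself if there is
none. -/
noncomputable def secondChoice (r : V → V ↪ α) (T : SimpleGraph V) (u : V) : V :=
  firstChoice r (T.deleteEdges {s(u, firstChoice r T u)}) u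

lemma adj_firstChoice_of_ne (h : firstChoice r T u ≠ u) : T.Adj u (firstChoice r T u) := by
  unfold firstChoice at h ⊢
  split_ifs at h ⊢ with hex
  · exact hex.choose_spec.1
  · exact absurd rfl h

lemma deleteEdges_firstChoice_adj :
    (T.deleteEdges {s(u, firstChoice r T u)}).Adj u v ↔ T.Adj u v ∧ v ≠ firstChoice r T u := by
  rw [SimpleGraph.deleteEdges_adj, Set.mem_singleton_iff, Sym2.congr_right]

lemma adj_secondChoice_and_ne (h : secondChoice r T u ≠ u) :
    T.Adj u (secondChoice r T u) ∧ secondChoice r T u ≠ firstChoice r T u :=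
  deleteEdges_firstChoice_adj.mp (adj_firstChoice_of_ne h)

variable [Finite V]

lemma isFirstChoice_firstChoice (huv : T.Adj u v) : IsFirstChoice r T u (firstChoice r T u) := by
  have hex : ∃ w, IsFirstChoice r T u w :=
    Set.exists_max_image {w | T.Adj u w} (r u) (Set.toFinite _) ⟨v, huv⟩
  rw [firstChoice, dif_pos hex]
  exact hex.choose_spec

lemma adj_firstChoice (huv : T.Adj u v) : T.Adj u (firstChoice r T u) :=
  (isFirstChoice_firstChoice huv).1

lemma firstChoice_ne_self (huv : T.Adj u v) : firstChoice r T u ≠ u :=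
  (adj_firstChoice huv).ne'

lemma isFirstChoice_secondChoice (huv : T.Adj u v) (hv : v ≠ firstChoice r T u) :
    IsFirstChoice r (T.deleteEdges {s(u, firstChoice r T u)}) u (secondChoice r T u) :=
  isFirstChoice_firstChoice (deleteEdges_firstChoice_adj.mpr ⟨huv, hv⟩)

lemma secondChoice_ne_self (huv : T.Adj u v) (hv : v ≠ firstChoice r T u) :
    secondChoice r T u ≠ u :=
  (isFirstChoice_secondChoice huv hv).1.ne'

lemma le_secondChoice (huv : T.Adj u v) (hv : v ≠ firstChoice r T u) :
    r u v ≤ r u (secondChoice r T u) :=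
  (isFirstChoice_secondChoice huv hv).2 v (deleteEdges_firstChoice_adj.mpr ⟨huv, hv⟩)

lemma firstChoice_injective (hT : Minimal (IsPreferenceTable G r) T) :
    Function.Injective (firstChoice r T) := by
  have hadj : ∀ u v, firstChoice r T u = firstChoice r T v → u ≠ v →
      T.Adj u (firstChoice r T u) := by
    intro u v huv hne
    refine adj_firstChoice_of_ne fun hu => ?_
    have hv : firstChoice r T v = u := huv.symm.trans hu
    have hvu : T.Adj v (firstChoice r T v) := adj_firstChoice_of_ne (hv.trans_ne hne)
    rw [hv] at hvu
    exact firstChoice_ne_self hvu.symm hu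
  intro u v huv
  by_contra hne
  have hu := isFirstChoice_firstChoice (r := r) (hadj u v huv hne)
  have hv := isFirstChoice_firstChoice (r := r) (hadj v u huv.symm (Ne.symm hne))
  rw [← huv] at hv
  exact hne ((r _).injective
    (le_antisymm (hu.le_of_minimal hT hv.1.symm) (hv.le_of_minimal hT hu.1.symm)))

/-- The permutation sending each agent with a nonempty list to its first choice and fixing all
others.  It is the stable partition given by a minimal table. -/
noncomputable def firstPerm (hT : Minimal (IsPreferenceTable G r) T) : Equiv.Perm V :=
  Equiv.ofBijective (firstChoice r T) (Finite.injective_iff_bijective.mp (firstChoice_injective hT))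

/-- The agent whose first choice is `u`, which is the last entry in the list of `u`; the agent `u`
itself if its list is empty. -/
noncomputable def lastChoice (hT : Minimal (IsPreferenceTable G r) T) (u : V) : V :=
  (firstPerm hT).symm u

variable (hT : Minimal (IsPreferenceTable G r) T)

lemma firstChoice_lastChoice (u : V) : firstChoice r T (lastChoice hT u) = u :=
  (firstPerm hT).apply_symm_apply u

lemma lastChoice_firstChoice (u : V) : lastChoice hT (firstChoice r T u) = u :=
  (firstPerm hT).symm_apply_apply u

lemma IsFirstChoice.eq_lastChoice (huv : IsFirstChoice r T u v) : u = lastChoice hT v := by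
  rw [huv.unique (isFirstChoice_firstChoice huv.1), lastChoice_firstChoice]

lemma isFirstChoice_lastChoice (huv : T.Adj u v) : IsFirstChoice r T (lastChoice hT u) u := by
  have hne : firstChoice r T (lastChoice hT u) ≠ lastChoice hT u := by
    intro hfix
    have hu : lastChoice hT u = u := hfix.symm.trans (firstChoice_lastChoice hT u)
    rw [hu] at hfix
    exact firstChoice_ne_self huv hfix
  simpa only [firstChoice_lastChoice] using
    isFirstChoice_firstChoice (r := r) (adj_firstChoice_of_ne hne)

lemma adj_lastChoice (huv : T.Adj u v) : T.Adj u (lastChoice hT u) :=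
  (isFirstChoice_lastChoice hT huv).1.symm

lemma lastChoice_le (huv : T.Adj u v) : r u (lastChoice hT u) ≤ r u v :=
  (isFirstChoice_lastChoice hT huv).le_of_minimal hT huv

lemma eq_firstChoice_or_eq_lastChoice_of_secondChoice (hu : secondChoice r T u = lastChoice hT u)
    (huv : T.Adj u v) : v = firstChoice r T u ∨ v = lastChoice hT u := by
  refine or_iff_not_imp_left.mpr fun hv => (r u).injective (le_antisymm ?_ (lastChoice_le hT huv))
  exact hu ▸ le_secondChoice huv hv

/-! ### Rotations -/

/-- The last choice of the second choice of `x`: the successor of `x` in a rotation. -/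
noncomputable def next (x : V) : V := lastChoice hT (secondChoice r T x)

variable {hT}

lemma firstChoice_next (x : V) : firstChoice r T (next hT x) = secondChoice r T x :=
  firstChoice_lastChoice hT _

lemma next_ne_self (hx : secondChoice r T x ≠ x) : next hT x ≠ x := by
  intro hfix
  refine (adj_secondChoice_and_ne hx).2 ?_
  rw [← firstChoice_next (hT := hT), hfix]

lemma adj_next (hx : secondChoice r T x ≠ x) : T.Adj (secondChoice r T x) (next hT x) :=
  adj_lastChoice hT (adj_secondChoice_and_ne hx).1.symm

lemma secondChoice_next_ne_self (hx : secondChoice r T x ≠ x) :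
    secondChoice r T (next hT x) ≠ next hT x := by
  have hsx := (adj_secondChoice_and_ne hx).1.symm
  refine secondChoice_ne_self (adj_lastChoice hT (adj_next hx).symm) fun heq => ?_
  -- otherwise `next x` is both the first and the last choice of `secondChoice x`, leaving no room
  -- for `x` in its list
  rw [firstChoice_next] at heq
  have hfirst := isFirstChoice_lastChoice hT (adj_next (hT := hT) hx).symm
  rw [heq] at hfirst
  exact next_ne_self hx ((r _).injective (le_antisymm (lastChoice_le hT hsx) (hfirst.2 x hsx)))

/-- A set of agents with at least two choices that is permuted by `next`, that is, a union of
rotations. -/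
structure IsRotationSet (hT : Minimal (IsPreferenceTable G r) T) (C : Set V) : Prop where
  secondChoice_ne : ∀ x ∈ C, secondChoice r T x ≠ x
  bijOn : Set.BijOn (next hT) C C

/-- When all agents of `C` propose to their second choices, the proposal of `x` does not survive
truncation, because `x` receives the proposal of its own first choice. -/
def ProposalFails (r : V → V ↪ α) (T : SimpleGraph V) (C : Set V) (x : V) : Prop :=
  firstChoice r T x ∈ C ∧ secondChoice r T (firstChoice r T x) = x

namespace IsRotationSet

lemma injOn_secondChoice (hC : IsRotationSet hT C) : Set.InjOn (secondChoice r T) C :=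
  fun _ hx _ hy hxy => hC.bijOn.injOn hx hy (congrArg (lastChoice hT) hxy)

/-- The `next`-predecessor of `x` proposes to `firstChoice x`, for whom `x` is the last choice. -/
lemma not_truncate_adj_firstChoice (hC : IsRotationSet hT C) (hx : x ∈ C) :
    ¬ (truncate r T C (secondChoice r T)).Adj x (firstChoice r T x) := by
  obtain ⟨y, hy, rfl⟩ := hC.bijOn.surjOn hx
  have hy₂ := hC.secondChoice_ne y hy
  rw [firstChoice_next]
  intro hkept
  exact next_ne_self hy₂ ((r _).injective
    (le_antisymm (lastChoice_le hT (adj_secondChoice_and_ne hy₂).1.symm) (hkept.2.2 y hy rfl)))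

lemma truncate_adj_secondChoice (hC : IsRotationSet hT C) (hx : x ∈ C)
    (hfx : ¬ ProposalFails r T C x) :
    (truncate r T C (secondChoice r T)).Adj x (secondChoice r T x) := by
  refine ⟨(adj_secondChoice_and_ne (hC.secondChoice_ne x hx)).1, fun t ht htx => ?_,
    fun t ht htx => ?_⟩
  · have hxt : T.Adj x t := by
      simpa only [htx] using (adj_secondChoice_and_ne (hC.secondChoice_ne t ht)).1.symm
    refine le_secondChoice hxt ?_
    rintro rfl
    exact hfx ⟨ht, htx⟩
  · rw [hC.injOn_secondChoice ht hx htx]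

lemma exists_proposalFails (hC : IsRotationSet hT C) (hne : C.Nonempty) :
    ∃ x ∈ C, ProposalFails r T C x := by
  by_contra! hno
  have hsurvive : ∀ x ∈ C,
      IsFirstChoice r (truncate r T C (secondChoice r T)) x (secondChoice r T x) := by
    refine fun x hx => ⟨hC.truncate_adj_secondChoice hx (hno x hx), fun w hw => ?_⟩
    refine le_secondChoice hw.1 ?_
    rintro rfl
    exact hC.not_truncate_adj_firstChoice hx hw
  obtain ⟨x, hx⟩ := hne
  exact hC.not_truncate_adj_firstChoice hx (le_truncate_of_minimal hT hsurvive
    (adj_firstChoice (adj_secondChoice_and_ne (hC.secondChoice_ne x hx)).1))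

lemma proposalFails_of_next (hC : IsRotationSet hT C) (hx : x ∈ C)
    (hnext : ProposalFails r T C (next hT x)) :
    ProposalFails r T C x ∧ secondChoice r T x = lastChoice hT x := by
  obtain ⟨hfn, hsfn⟩ := hnext
  rw [firstChoice_next] at hfn hsfn
  have hx₂ := hC.secondChoice_ne x hx
  have hx_first : x = firstChoice r T (secondChoice r T x) :=
    (eq_firstChoice_or_eq_lastChoice_of_secondChoice hT hsfn
      (adj_secondChoice_and_ne hx₂).1.symm).resolve_right (next_ne_self (hT := hT) hx₂).symm
  have hx_short : secondChoice r T x = lastChoice hT x := by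
    conv_rhs => rw [hx_first, lastChoice_firstChoice]
  obtain ⟨w, hw, hwx⟩ := hC.bijOn.surjOn hfn
  have hw₂ := hC.secondChoice_ne w hw
  have hsw : secondChoice r T w = x := by
    rw [← firstChoice_next (hT := hT), hwx, ← hx_first]
  have hxw : T.Adj x w := by
    simpa only [hsw] using (adj_secondChoice_and_ne hw₂).1.symm
  have hw_first : w = firstChoice r T x := by
    refine (eq_firstChoice_or_eq_lastChoice_of_secondChoice hT hx_short hxw).resolve_right ?_
    exact fun hwl => next_ne_self hw₂ (hwx.trans (hx_short.trans hwl.symm))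
  subst hw_first
  exact ⟨⟨hw, hsw⟩, hx_short⟩

lemma proposalFails (hC : IsRotationSet hT C) (hx : x ∈ C) : ProposalFails r T C x := by
  by_contra hx_survives
  let B : Set V := {y ∈ C | ¬ ProposalFails r T C y}
  have hmaps : Set.MapsTo (next hT) B B := fun y hy =>
    ⟨hC.bijOn.mapsTo hy.1, fun hn => hy.2 (hC.proposalFails_of_next hy.1 hn).1⟩
  have hB : IsRotationSet hT B := by
    refine ⟨fun y hy => hC.secondChoice_ne y hy.1, ?_⟩
    exact (B.toFinite.injOn_iff_bijOn_of_mapsTo hmaps).mp (hC.bijOn.injOn.mono fun y hy => hy.1)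
  obtain ⟨y, hy, hfy, hsfy⟩ := hB.exists_proposalFails ⟨x, hx, hx_survives⟩
  exact hy.2 ⟨hfy.1, hsfy⟩

lemma secondChoice_eq_lastChoice (hC : IsRotationSet hT C) (hx : x ∈ C) :
    secondChoice r T x = lastChoice hT x :=
  (hC.proposalFails_of_next hx (hC.proposalFails (hC.bijOn.mapsTo hx))).2

lemma lastChoice_mem (hC : IsRotationSet hT C) (hx : x ∈ C) : lastChoice hT x ∈ C := by
  rw [← hC.secondChoice_eq_lastChoice hx, ← firstChoice_next (hT := hT)]
  exact (hC.proposalFails (hC.bijOn.mapsTo hx)).1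

lemma mem_of_adj (hC : IsRotationSet hT C) (hu : u ∈ C) (huv : T.Adj u v) : v ∈ C := by
  have hshort := hC.secondChoice_eq_lastChoice hu
  rcases eq_firstChoice_or_eq_lastChoice_of_secondChoice hT hshort huv with rfl | rfl
  · exact (hC.proposalFails hu).1
  · exact hC.lastChoice_mem hu

lemma mem_of_next_mem (hC : IsRotationSet hT C) (hx : secondChoice r T x ≠ x)
    (hnext : next hT x ∈ C) : x ∈ C :=
  hC.mem_of_adj (hC.mem_of_adj hnext (adj_next hx).symm) (adj_secondChoice_and_ne hx).1.symm

lemma mem_of_iterate_next_mem (hC : IsRotationSet hT C) {k : ℕ} (hx : secondChoice r T x ≠ x)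
    (hk : (next hT)^[k] x ∈ C) : x ∈ C := by
  induction k generalizing x with
  | zero => exact hk
  | succ k ih => exact hC.mem_of_next_mem hx (ih (secondChoice_next_ne_self hx) hk)

end IsRotationSet

lemma isRotationSet_periodicPts : IsRotationSet hT
    {x | secondChoice r T x ≠ x ∧ x ∈ Function.periodicPts (next hT)} := by
  refine ⟨fun x hx => hx.1, ((Set.toFinite _).injOn_iff_bijOn_of_mapsTo ?_).mp ?_⟩
  · exact fun x hx =>
      ⟨secondChoice_next_ne_self hx.1, (Function.bijOn_periodicPts (next hT)).mapsTo hx.2⟩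
  · exact (Function.bijOn_periodicPts (next hT)).injOn.mono fun x hx => hx.2

lemma eq_firstChoice_or_eq_lastChoice (huv : T.Adj u v) :
    v = firstChoice r T u ∨ v = lastChoice hT u := by
  refine or_iff_not_imp_left.mpr fun hv => ?_
  have hu := secondChoice_ne_self huv hv
  obtain ⟨k, hk⟩ := exists_iterate_mem_periodicPts (next hT) u
  have hlong : secondChoice r T ((next hT)^[k] u) ≠ (next hT)^[k] u :=
    Set.MapsTo.iterate (s := {x | secondChoice r T x ≠ x})
      (fun _ => secondChoice_next_ne_self) k hu
  have hmem := isRotationSet_periodicPts.mem_of_iterate_next_mem hu ⟨hlong, hk⟩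
  have hshort := isRotationSet_periodicPts.secondChoice_eq_lastChoice hmem
  exact (eq_firstChoice_or_eq_lastChoice_of_secondChoice hT hshort huv).resolve_left hv

/-! ### Stable partitions -/

lemma isSatisfied_firstPerm (huw : T.Adj u w) (hv : r u v ≤ r u (lastChoice hT u)) :
    IsSatisfied (fun x => r x) (firstPerm hT) u v :=
  ⟨firstChoice_ne_self huw,
    hv.trans ((isFirstChoice_firstChoice huw).2 _ (adj_lastChoice hT huw)), hv⟩

lemma isStablePartition_firstPerm (hT : Minimal (IsPreferenceTable G r) T) :
    IsStablePartition G (fun x => r x) (firstPerm hT) where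
  adj u hu := hT.prop.le (adj_firstChoice_of_ne hu)
  isSatisfied u v huv := by
    have hrejects : ∀ {x y}, Rejects r T x y → IsSatisfied (fun x => r x) (firstPerm hT) x y := by
      rintro x y ⟨t, htx, hlt⟩
      exact isSatisfied_firstPerm htx.1.symm (htx.eq_lastChoice hT ▸ hlt.le)
    by_cases hTuv : T.Adj u v
    · rcases eq_firstChoice_or_eq_lastChoice (hT := hT) hTuv with hv | hv
      · refine Or.inr (isSatisfied_firstPerm hTuv.symm ?_)
        rw [hv, lastChoice_firstChoice]
      · exact Or.inl (isSatisfied_firstPerm hTuv (by rw [hv]))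
    · exact (hT.prop.rejects u v huv hTuv).imp hrejects hrejects

end Table

theorem exists_isStablePartition [Finite V] {α : Type*} [LinearOrder α] (G : SimpleGraph V)
    (p : V → V → α) : ∃ π, IsStablePartition G p π := by
  obtain ⟨r, hr⟩ := exists_strict_refinement p
  obtain ⟨T, hT⟩ := exists_minimal_of_wellFoundedLT (IsPreferenceTable G r)
    ⟨G, isPreferenceTable_self G r⟩
  exact ⟨firstPerm hT, (isStablePartition_firstPerm hT).of_refinement hr⟩

/-! ### The half-integral matching -/

/-- The graph of acceptable pairs, with edges as in `Adj`. -/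
def acceptabilityGraph (sat : V → V → ℚ) : SimpleGraph V :=
  SimpleGraph.fromRel fun u v => 0 < sat u v

lemma acceptabilityGraph_adj {sat : V → V → ℚ} (hsat : ∀ u, sat u u = 0) {u v : V} :
    (acceptabilityGraph sat).Adj u v ↔ Adj sat u v := by
  rw [acceptabilityGraph, SimpleGraph.fromRel_adj, Adj, and_iff_right_iff_imp]
  rintro h rfl
  simp only [hsat, lt_irrefl, or_self] at h

/-- Weight one half on each step of each nontrivial cycle of `π`, so that the cycles of length two
carry weight one. -/
noncomputable def halfMatching (π : Equiv.Perm V) (u v : V) : ℝ :=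
  if u = v then 0 else ((if π u = v then 1 else 0) + (if π v = u then 1 else 0)) / 2

section HalfMatching

variable {π : Equiv.Perm V}

lemma halfMatching_comm (π : Equiv.Perm V) (u v : V) : halfMatching π u v = halfMatching π v u := by
  simp only [halfMatching, eq_comm (a := u) (b := v), add_comm]

lemma halfMatching_eq_zero_or (π : Equiv.Perm V) (u v : V) :
    halfMatching π u v = 0 ∨ halfMatching π u v = 1 / 2 ∨ halfMatching π u v = 1 := by
  unfold halfMatching
  split_ifs <;> norm_num

lemma halfMatching_nonneg (π : Equiv.Perm V) (u v : V) : 0 ≤ halfMatching π u v := by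
  rcases halfMatching_eq_zero_or π u v with h | h | h <;> rw [h] <;> norm_num

lemma apply_eq_or_of_halfMatching_ne_zero {u v : V} (h : halfMatching π u v ≠ 0) :
    u ≠ v ∧ (π u = v ∨ π v = u) := by
  contrapose! h
  unfold halfMatching
  split_ifs <;> simp_all

lemma sum_halfMatching_eq_one {u : V} {S : Finset V} (hu : π u ≠ u) (hsucc : π u ∈ S)
    (hpred : π.symm u ∈ S) : ∑ v ∈ S, halfMatching π u v = 1 := by
  have hformula : ∀ v, halfMatching π u v =
      ((if π u = v then 1 else 0) + (if π.symm u = v then 1 else 0)) / 2 := by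
    intro v
    rcases eq_or_ne u v with rfl | hne
    · simp [halfMatching, hu, Equiv.symm_apply_eq, hu.symm]
    · simp [halfMatching, hne, Equiv.symm_apply_eq, eq_comm (a := u)]
  simp only [hformula]
  rw [← sum_div, sum_add_distrib, sum_ite_eq, sum_ite_eq, if_pos hsucc, if_pos hpred]
  norm_num

variable [Fintype V]

lemma sum_halfMatching_of_fixed {u : V} (hu : π u = u) : ∑ v, halfMatching π u v = 0 := by
  refine sum_eq_zero fun v _ => by_contra fun hne => ?_
  obtain ⟨hne', h | h⟩ := apply_eq_or_of_halfMatching_ne_zero hne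
  · exact hne' (hu.symm.trans h)
  · exact hne' (π.injective (hu.trans h.symm))

lemma sum_halfMatching_eq_zero_or_one (π : Equiv.Perm V) (u : V) :
    ∑ v, halfMatching π u v = 0 ∨ ∑ v, halfMatching π u v = 1 :=
  (em (π u = u)).imp sum_halfMatching_of_fixed
    fun hu => sum_halfMatching_eq_one hu (mem_univ _) (mem_univ _)

variable {sat : V → V → ℚ}

lemma isMatching_halfMatching (hπ : ∀ u, π u ≠ u → Adj sat u (π u)) :
    IsMatching sat (halfMatching π) where
  symm := halfMatching_comm π
  nonneg := halfMatching_nonneg π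
  support u v huv := by
    by_contra hne
    obtain ⟨hne', rfl | rfl⟩ := apply_eq_or_of_halfMatching_ne_zero hne
    · exact huv (hπ u hne'.symm)
    · exact huv (hπ v hne').symm
  degree_le_one u := by
    rcases sum_halfMatching_eq_zero_or_one π u with h | h <;> rw [h]
    exact zero_le_one

lemma wge_halfMatching {u v : V} (hπ : ∀ u, π u ≠ u → Adj sat u (π u))
    (huv : IsSatisfied sat π u v) : wge sat (halfMatching π) u v = 1 := by
  have hpred : Adj sat (π.symm u) u := by
    have hne : u ≠ π.symm u := fun h => huv.1 (π.eq_symm_apply.mp h)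
    simpa only [π.apply_symm_apply] using hπ (π.symm u) ((π.apply_symm_apply u).trans_ne hne)
  exact sum_halfMatching_eq_one huv.1 (mem_filter.mpr ⟨mem_univ _, hπ u huv.1, huv.2.1⟩)
    (mem_filter.mpr ⟨mem_univ _, hpred.symm, huv.2.2⟩)

lemma ordStable_halfMatching (hπ : ∀ u, π u ≠ u → Adj sat u (π u))
    (hstable : ∀ u v, Adj sat u v → IsSatisfied sat π u v ∨ IsSatisfied sat π v u) :
    OrdStable sat (halfMatching π) := by
  rintro u v huv ⟨hu, hv⟩
  exact (hstable u v huv).elim (fun h => hu.ne (wge_halfMatching hπ h))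
    fun h => hv.ne (wge_halfMatching hπ h)

end HalfMatching

lemma le_util_of_one_le_wge [Fintype V] {sat : V → V → ℚ} {M : V → V → ℝ} {u v : V}
    (hsat : ∀ z, 0 ≤ sat u z) (hM : ∀ z, 0 ≤ M u z) (h : 1 ≤ wge sat M u v) :
    (sat u v : ℝ) ≤ util sat M u := by
  have hsat' : ∀ z, (0 : ℝ) ≤ sat u z := fun z => Rat.cast_nonneg.mpr (hsat z)
  calc (sat u v : ℝ) ≤ sat u v * wge sat M u v := le_mul_of_one_le_right (hsat' v) h
    _ = ∑ z with Adj sat u z ∧ sat u v ≤ sat u z, (sat u v : ℝ) * M u z := by rw [wge, mul_sum]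
    _ ≤ ∑ z with Adj sat u z ∧ sat u v ≤ sat u z, (sat u z : ℝ) * M u z := by
      refine sum_le_sum fun z hz => mul_le_mul_of_nonneg_right ?_ (hM z)
      exact_mod_cast (mem_filter.mp hz).2.2
    _ ≤ util sat M u :=
      sum_le_sum_of_subset_of_nonneg (filter_subset _ _) fun z _ _ =>
        mul_nonneg (hsat' z) (hM z)

lemma OrdStable.cardStable [Fintype V] {sat : V → V → ℚ} {M : V → V → ℝ}
    (h : OrdStable sat M) (hsat : ∀ u v, 0 ≤ sat u v) (hM : ∀ u v, 0 ≤ M u v) :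
    CardStable sat M := by
  rintro u v huv ⟨hu, hv⟩
  refine h u v huv ⟨?_, ?_⟩ <;> by_contra! hge
  · exact hu.not_ge (le_util_of_one_le_wge (hsat u) (hM u) hge)
  · exact hv.not_ge (le_util_of_one_le_wge (hsat v) (hM v) hge)

/-- Every instance (possibly with ties) admits an ordinally stable (hence
also cardinally stable) half-integral fractional matching in which every matched agent
is fully matched. -/
theorem exists_halfIntegral_ordinallyStable_matching [Fintype V]
    (sat : V → V → ℚ) (hinst : IsInstance sat) :
    ∃ M : V → V → ℝ, IsMatching sat M ∧ OrdStable sat M ∧ CardStable sat M ∧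
      (∀ u v, M u v = 0 ∨ M u v = 1/2 ∨ M u v = 1) ∧
      (∀ v, 0 < ∑ u, M v u → ∑ u, M v u = 1) := by
  obtain ⟨π, hπ⟩ := exists_isStablePartition (acceptabilityGraph sat) sat
  have hadj : ∀ u v, (acceptabilityGraph sat).Adj u v ↔ Adj sat u v :=
    fun _ _ => acceptabilityGraph_adj hinst.sat_self
  have hsucc : ∀ u, π u ≠ u → Adj sat u (π u) := fun u hu => (hadj _ _).mp (hπ.adj u hu)
  have hmatching : IsMatching sat (halfMatching π) := isMatching_halfMatching hsucc
  have hord : OrdStable sat (halfMatching π) :=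
    ordStable_halfMatching hsucc fun u v huv => hπ.isSatisfied u v ((hadj u v).mpr huv)
  refine ⟨halfMatching π, hmatching, hord, hord.cardStable hinst.nonneg hmatching.nonneg,
    halfMatching_eq_zero_or π, fun v hv => ?_⟩
  exact (sum_halfMatching_eq_zero_or_one π v).resolve_left hv.ne'
end

section
/- Let G be a bipartite graph with cardinal preferences sat, let M be an ordinally stable fractional matching of (G, sat), and let M₁, …, M_k together with positive reals x₁, …, x_k (Σ_j x_j = 1) be a support of M. Then every M_j, j ∈ [k], is a stable integral matching, i.e., for every edge {u,v} of G, M_j(u, ≽ v) = 1 or M_j(v, ≽ u) = 1. -/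
/-!
For a fixed pair of agents `u, v`, the value `M(u, ≽ v)` is linear in `M` and at most `1` on
matchings. Ordinal stability says that for each edge `{u, v}` one of `M(u, ≽ v)`, `M(v, ≽ u)`
attains this maximum, and a convex combination with positive weights attains an upper bound only
if every term does.
-/

open Finset
open scoped Classical

variable {V : Type*}

section ConvexCombination

variable {ι R E : Type*} [Semiring R] [PartialOrder R]
  [AddCommMonoid E] [PartialOrder E] [IsOrderedCancelAddMonoid E] [Module R E]
  [PosSMulStrictMono R E] {s : Finset ι} {x : ι → R} {w : ι → E} {c : E}

theorem eq_of_le_sum_smul_of_forall_le (hx : ∀ i ∈ s, 0 < x i) (hxsum : ∑ i ∈ s, x i = 1)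
    (hw : ∀ i ∈ s, w i ≤ c) (hc : c ≤ ∑ i ∈ s, x i • w i) {j : ι} (hj : j ∈ s) : w j = c := by
  by_contra hne
  have hlt : ∑ i ∈ s, x i • w i < c := calc
    ∑ i ∈ s, x i • w i < ∑ i ∈ s, x i • c :=
      Finset.sum_lt_sum (fun i hi => smul_le_smul_of_nonneg_left (hw i hi) (hx i hi).le)
        ⟨j, hj, smul_lt_smul_of_pos_left ((hw j hj).lt_of_ne hne) (hx j hj)⟩
    _ = c := by rw [← Finset.sum_smul, hxsum, one_smul]
  exact hc.not_gt hlt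

end ConvexCombination

section Support

variable [Fintype V] {sat : V → V → ℚ}

theorem IsMatching.wge_le_one {M : V → V → ℝ} (hM : IsMatching sat M) (u v : V) :
    wge sat M u v ≤ 1 := calc
  wge sat M u v ≤ ∑ z, M u z := Finset.sum_le_univ_sum_of_nonneg (hM.nonneg u)
  _ ≤ 1 := hM.degree_le_one u

theorem wge_sum_smul {ι : Type*} (s : Finset ι) (x : ι → ℝ)
    (Ms : ι → V → V → ℝ) (u v : V) :
    wge sat (∑ i ∈ s, x i • Ms i) u v = ∑ i ∈ s, x i • wge sat (Ms i) u v := by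
  simp only [wge, Finset.sum_apply, Pi.smul_apply, Finset.smul_sum]
  exact Finset.sum_comm

variable {ι : Type*} {s : Finset ι} {x : ι → ℝ} {Ms : ι → V → V → ℝ}

theorem wge_eq_one_of_one_le_wge_sum_smul (hx : ∀ i ∈ s, 0 < x i) (hxsum : ∑ i ∈ s, x i = 1)
    (hMs : ∀ i ∈ s, IsMatching sat (Ms i)) {u v : V}
    (h : 1 ≤ wge sat (∑ i ∈ s, x i • Ms i) u v) {j : ι} (hj : j ∈ s) :
    wge sat (Ms j) u v = 1 :=
  eq_of_le_sum_smul_of_forall_le hx hxsum (fun i hi => (hMs i hi).wge_le_one u v)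
    (h.trans_eq (wge_sum_smul s x Ms u v)) hj

theorem support_of_ordinallyStable_is_stable_general (hx : ∀ i ∈ s, 0 < x i)
    (hxsum : ∑ i ∈ s, x i = 1) (hMs : ∀ i ∈ s, IsMatching sat (Ms i))
    (hOS : OrdStable sat (∑ i ∈ s, x i • Ms i)) {j : ι} (hj : j ∈ s) {u v : V}
    (huv : Adj sat u v) : wge sat (Ms j) u v = 1 ∨ wge sat (Ms j) v u = 1 := by
  have saturated : ∀ a b, ¬ wge sat (∑ i ∈ s, x i • Ms i) a b < 1 → wge sat (Ms j) a b = 1 :=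
    fun _ _ h => wge_eq_one_of_one_le_wge_sum_smul hx hxsum hMs (not_lt.mp h) hj
  exact (not_and_or.mp (hOS u v huv)).imp (saturated u v) (saturated v u)

end Support

/-- every integral matching in a support of an ordinally stable fractional
matching of a bipartite instance is a stable integral matching: for every edge `{u,v}`,
`M_j(u, ≽ v) = 1` or `M_j(v, ≽ u) = 1`. -/
theorem support_of_ordinallyStable_is_stable [Fintype V]
    (sat : V → V → ℚ) (hinst : IsInstance sat)
    (hbip : ∃ U : Set V, BipartiteWith sat U)
    (M : V → V → ℝ) (hM : IsMatching sat M) (hOS : OrdStable sat M)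
    (k : ℕ) (x : Fin k → ℝ) (Ms : Fin k → V → V → ℝ)
    (hx : ∀ j, 0 < x j) (hxsum : ∑ j, x j = 1)
    (hMs : ∀ j, IsMatching sat (Ms j) ∧ IntegralMatching (Ms j))
    (hconv : ∀ u v, M u v = ∑ j, x j * Ms j u v) :
    ∀ j, ∀ u v, Adj sat u v → (wge sat (Ms j) u v = 1 ∨ wge sat (Ms j) v u = 1) := by
  obtain rfl : M = ∑ j, x j • Ms j := by ext a b; simp [hconv]
  exact fun j _ _ huv => support_of_ordinallyStable_is_stable_general (fun i _ => hx i) hxsum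
    (fun i _ => (hMs i).1) hOS (Finset.mem_univ j) huv
end

section
/- Let G be a bipartite graph with cardinal preferences sat (ties allowed) and let γ be a real number. Then (G, sat) admits an ordinally stable fractional matching M with welfare(M) ≥ γ if and only if (G, sat) admits a stable integral matching N with welfare(N) ≥ γ. -/
/-!
Every value `M(x, ≽ y)` is linear in `M` and at most `1` on matchings, and stability says that
certain of these values equal `1`. If a stable `M` is a convex combination of matchings with
positive weights, then each of these matchings attains the value `1` wherever `M` does, and so is
itself stable. Welfare is linear too, so one of them has welfare at least `welfare M`.

For a bipartite instance `M` is a convex combination of integral matchings: placing the slack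
`1 - ∑ u, M v u` on the diagonal makes `M` doubly stochastic, Birkhoff's theorem writes the result
as a convex combination of permutation matrices, and each permutation matrix becomes an integral
matching when only its entries in the rows in `U` and the columns outside `U` are kept and
symmetrized. Off the edges `M u v = 0` is the least possible value of an entry, so by the same
argument as above those with positive weight vanish there too.
-/

open Finset
open scoped Classical

variable {V : Type*}

section ConvexHull

variable {𝕜 E : Type*} [Field 𝕜] [LinearOrder 𝕜] [IsStrictOrderedRing 𝕜] [AddCommGroup E]
  [Module 𝕜 E]

/-- The functionals `ℓ` cut out the smallest face of the convex hull that contains `x`. -/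
theorem mem_convexHull_setOf_linearMap_apply_eq {s : Set E} {x : E} (hx : x ∈ convexHull 𝕜 s) :
    x ∈ convexHull 𝕜 {y ∈ s | ∀ ℓ : E →ₗ[𝕜] 𝕜, (∀ z ∈ s, ℓ z ≤ ℓ x) → ℓ y = ℓ x} := by
  obtain ⟨ι, _, z, w, hzs, -, hw, hw_sum, hz_sum⟩ := eq_pos_convex_span_of_mem_convexHull hx
  rw [Set.range_subset_iff] at hzs
  suffices h : ∀ i, ∀ ℓ : E →ₗ[𝕜] 𝕜, (∀ y ∈ s, ℓ y ≤ ℓ x) → ℓ (z i) = ℓ x by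
    rw [← hz_sum] at h ⊢
    exact (convex_convexHull 𝕜 _).sum_mem (fun i _ => (hw i).le) hw_sum
      fun i _ => subset_convexHull 𝕜 _ ⟨hzs i, h i⟩
  intro i ℓ hℓ
  have h_sum : ∑ j, w j * ℓ (z j) = ∑ j, w j * ℓ x :=
    calc ∑ j, w j * ℓ (z j) = ℓ x := by simp only [← hz_sum, map_sum, map_smul, smul_eq_mul]
      _ = ∑ j, w j * ℓ x := by rw [← sum_mul, hw_sum, one_mul]
  have h_le : ∀ j ∈ univ, w j * ℓ (z j) ≤ w j * ℓ x := fun j _ =>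
    mul_le_mul_of_nonneg_left (hℓ _ (hzs j)) (hw j).le
  exact mul_left_cancel₀ (hw i).ne' ((sum_eq_sum_iff_of_le h_le).1 h_sum i (mem_univ i))

end ConvexHull

section CrossSymm

variable {R : Type*} [Semiring R]

/-- The symmetric matrix supported on the pairs with exactly one element in `U`, whose entry at such
a pair is the entry of `B` in the row of the element in `U` and the column of the other one. It
turns a permutation into a matching between `U` and its complement. -/
noncomputable def crossSymm (U : Set V) : Matrix V V R →ₗ[R] V → V → R where
  toFun B u v := if u ∈ U ∧ v ∉ U then B u v else if v ∈ U ∧ u ∉ U then B v u else 0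
  map_add' A B := by
    ext u v
    simp only [Matrix.add_apply, Pi.add_apply]
    split_ifs <;> simp only [add_zero]
  map_smul' c B := by
    ext u v
    simp only [Matrix.smul_apply, Pi.smul_apply, RingHom.id_apply]
    split_ifs <;> simp only [smul_zero]

lemma crossSymm_apply (U : Set V) (B : Matrix V V R) (u v : V) :
    crossSymm U B u v =
      if u ∈ U ∧ v ∉ U then B u v else if v ∈ U ∧ u ∉ U then B v u else 0 :=
  rfl

lemma crossSymm_comm (U : Set V) (B : Matrix V V R) (u v : V) :
    crossSymm U B u v = crossSymm U B v u := by
  simp only [crossSymm_apply]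
  split_ifs <;> tauto

lemma crossSymm_permMatrix_eq_zero_or_one (U : Set V) (σ : Equiv.Perm V) (u v : V) :
    crossSymm U (σ.permMatrix R) u v = 0 ∨ crossSymm U (σ.permMatrix R) u v = 1 := by
  simp only [crossSymm_apply, PEquiv.toMatrix_apply]
  split_ifs <;> simp only [true_or, or_true]

variable [PartialOrder R] [IsOrderedRing R] [Fintype V] {B : Matrix V V R}

lemma crossSymm_nonneg (U : Set V) (hB : B ∈ doublyStochastic R V) (u v : V) :
    0 ≤ crossSymm U B u v := by
  rw [crossSymm_apply]
  split_ifs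
  exacts [hB.1 u v, hB.1 v u, le_rfl]

lemma sum_crossSymm_le_one (U : Set V) (hB : B ∈ doublyStochastic R V) (u : V) :
    ∑ v, crossSymm U B u v ≤ 1 := by
  by_cases hu : u ∈ U
  · rw [← sum_row_of_mem_doublyStochastic hB u]
    refine sum_le_sum fun v _ => ?_
    simp only [crossSymm_apply, hu, true_and, not_true, and_false, if_false]
    split_ifs
    exacts [hB.1 u v, le_rfl]
  · rw [← sum_col_of_mem_doublyStochastic hB u]
    refine sum_le_sum fun v _ => ?_
    simp only [crossSymm_apply, hu, false_and, not_false_eq_true, and_true, if_false]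
    split_ifs
    exacts [le_rfl, hB.1 v u]

end CrossSymm

section Matching

variable [Fintype V] {sat : V → V → ℚ} {M : V → V → ℝ}

lemma isLinearMap_wge (sat : V → V → ℚ) (x y : V) : IsLinearMap ℝ fun M => wge sat M x y where
  map_add _ _ := sum_add_distrib
  map_smul _ _ := (mul_sum _ _ _).symm

lemma isLinearMap_welfare (sat : V → V → ℚ) : IsLinearMap ℝ (welfare sat) where
  map_add M N := by
    simp only [welfare, util, Pi.add_apply, mul_add, sum_add_distrib]
  map_smul c M := by
    simp only [welfare, util, Pi.smul_apply, smul_eq_mul, mul_sum, mul_left_comm]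

namespace IsMatching

lemma wge_le_one_s11 (hM : IsMatching sat M) (x y : V) : wge sat M x y ≤ 1 :=
  (sum_le_univ_sum_of_nonneg (hM.nonneg x)).trans (hM.degree_le_one x)

lemma add_diagonal_mem_doublyStochastic (hM : IsMatching sat M) :
    Matrix.of M + Matrix.diagonal (fun v => 1 - ∑ u, M v u) ∈ doublyStochastic ℝ V := by
  have h_slack : 0 ≤ fun v => 1 - ∑ u, M v u := fun v => sub_nonneg.2 (hM.degree_le_one v)
  have h_col : ∀ v, ∑ u, M u v = ∑ u, M v u := fun v => sum_congr rfl fun u _ => hM.symm u v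
  refine mem_doublyStochastic_iff_sum.2 ⟨fun u v => add_nonneg (hM.nonneg u v) ?_, ?_, ?_⟩
  · rw [Matrix.diagonal_apply]
    split_ifs
    exacts [h_slack u, le_rfl]
  · simp [sum_add_distrib, Matrix.diagonal_apply]
  · simp [sum_add_distrib, Matrix.diagonal_apply, h_col]

lemma crossSymm_add_diagonal (hM : IsMatching sat M) {U : Set V} (hU : BipartiteWith sat U)
    (d : V → ℝ) : crossSymm U (Matrix.of M + Matrix.diagonal d) = M := by
  have h_diag : ∀ {u v}, u ∈ U → v ∉ U → Matrix.diagonal d u v = 0 := fun hu hv =>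
    Matrix.diagonal_apply_ne d fun h => hv (h ▸ hu)
  ext u v
  simp only [crossSymm_apply, Matrix.add_apply, Matrix.of_apply]
  split_ifs with huv hvu
  · rw [h_diag huv.1 huv.2, add_zero]
  · rw [h_diag hvu.1 hvu.2, add_zero, hM.symm]
  · refine (hM.support u v fun h => ?_).symm
    have := hU u v h
    tauto

theorem mem_convexHull_integralMatching (hM : IsMatching sat M) {U : Set V}
    (hU : BipartiteWith sat U) :
    M ∈ convexHull ℝ {N | IsMatching sat N ∧ IntegralMatching N} := by
  have h_mem : M ∈ convexHull ℝ (crossSymm U '' {P | ∃ σ : Equiv.Perm V, σ.permMatrix ℝ = P}) := by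
    rw [← LinearMap.image_convexHull, ← doublyStochastic_eq_convexHull_permMatrix]
    exact ⟨_, hM.add_diagonal_mem_doublyStochastic, hM.crossSymm_add_diagonal hU _⟩
  refine convexHull_mono ?_ (mem_convexHull_setOf_linearMap_apply_eq h_mem)
  rintro _ ⟨⟨_, ⟨σ, rfl⟩, rfl⟩, hface⟩
  refine ⟨⟨crossSymm_comm U _, crossSymm_nonneg U permMatrix_mem_doublyStochastic, ?_,
    sum_crossSymm_le_one U permMatrix_mem_doublyStochastic⟩,
    crossSymm_permMatrix_eq_zero_or_one U σ⟩
  intro u v huv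
  let negEntry : (V → V → ℝ) →ₗ[ℝ] ℝ :=
    -((LinearMap.proj v : (V → ℝ) →ₗ[ℝ] ℝ) ∘ₗ LinearMap.proj u)
  have h_max : ∀ N ∈ crossSymm U '' {P | ∃ σ : Equiv.Perm V, σ.permMatrix ℝ = P},
      negEntry N ≤ negEntry M := by
    rintro _ ⟨_, ⟨τ, rfl⟩, rfl⟩
    simpa [negEntry, hM.support u v huv] using
      crossSymm_nonneg U (permMatrix_mem_doublyStochastic (σ := τ)) u v
  simpa [negEntry, hM.support u v huv] using hface negEntry h_max

end IsMatching

theorem OrdStable.mem_convexHull_ordStable {S : Set (V → V → ℝ)} (hM : OrdStable sat M)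
    (hS : ∀ N ∈ S, IsMatching sat N) (hMS : M ∈ convexHull ℝ S) :
    M ∈ convexHull ℝ {N ∈ S | OrdStable sat N} := by
  refine convexHull_mono ?_ (mem_convexHull_setOf_linearMap_apply_eq hMS)
  rintro N ⟨hNS, hface⟩
  have h_tight : ∀ x y, wge sat N x y < 1 → wge sat M x y < 1 := by
    intro x y hN
    by_contra! hMxy
    have h_eq : wge sat N x y = wge sat M x y := hface (isLinearMap_wge sat x y).mk'
      fun N' hN' => ((hS N' hN').wge_le_one_s11 x y).trans hMxy
    exact hN.not_ge (hMxy.trans_eq h_eq.symm)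
  exact ⟨hNS, fun u v huv hblock =>
    hM u v huv ⟨h_tight u v hblock.1, h_tight v u hblock.2⟩⟩

theorem IsMatching.exists_integral_ordStable_welfare_le (hM : IsMatching sat M)
    (hstable : OrdStable sat M) {U : Set V} (hU : BipartiteWith sat U) :
    ∃ N, IsMatching sat N ∧ IntegralMatching N ∧ OrdStable sat N ∧
      welfare sat M ≤ welfare sat N := by
  have h_mem := hstable.mem_convexHull_ordStable (fun N hN => hN.1)
    (hM.mem_convexHull_integralMatching hU)
  obtain ⟨N, ⟨⟨hN, hN_int⟩, hN_stable⟩, h_le⟩ :=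
    ((isLinearMap_welfare sat).mk'.convexOn convex_univ).exists_ge_of_mem_convexHull
      (Set.subset_univ _) h_mem
  exact ⟨N, hN, hN_int, hN_stable, h_le⟩

theorem exists_ordinallyStable_welfare_iff_exists_stable_integral_general
    (hbip : ∃ U : Set V, BipartiteWith sat U) (γ : ℝ) :
    (∃ M : V → V → ℝ, IsMatching sat M ∧ OrdStable sat M ∧ γ ≤ welfare sat M) ↔
    (∃ N : V → V → ℝ, IsMatching sat N ∧ IntegralMatching N ∧ OrdStable sat N ∧
      γ ≤ welfare sat N) := by
  obtain ⟨U, hU⟩ := hbip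
  constructor
  · rintro ⟨M, hM, hM_stable, hγ⟩
    obtain ⟨N, hN, hN_int, hN_stable, h_le⟩ := hM.exists_integral_ordStable_welfare_le hM_stable hU
    exact ⟨N, hN, hN_int, hN_stable, hγ.trans h_le⟩
  · rintro ⟨N, hN, -, hN_stable, hγ⟩
    exact ⟨N, hN, hN_stable, hγ⟩

end Matching

/-- a bipartite instance (ties allowed) admits an ordinally stable
fractional matching of welfare at least `γ` iff it admits a stable integral matching of
welfare at least `γ`. -/
theorem exists_ordinallyStable_welfare_iff_exists_stable_integral [Fintype V]
    (sat : V → V → ℚ) (hinst : IsInstance sat)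
    (hbip : ∃ U : Set V, BipartiteWith sat U) (γ : ℝ) :
    (∃ M : V → V → ℝ, IsMatching sat M ∧ OrdStable sat M ∧ γ ≤ welfare sat M) ↔
    (∃ N : V → V → ℝ, IsMatching sat N ∧ IntegralMatching N ∧ OrdStable sat N ∧
      γ ≤ welfare sat N) :=
  exists_ordinallyStable_welfare_iff_exists_stable_integral_general hbip γ
end

section
/- Let G be a bipartite graph with cardinal preferences sat (ties allowed) and let τ be a non-negative integer. Then (G, sat) admits an ordinally stable fractional matching M with at least τ fully matched agents if and only if (G, sat) admits a stable integral matching N in which at least τ agents are matched. -/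
/-!
Let `M` be ordinally stable. Since all degrees are at most one, `M(x, ≽ y)` reaches one exactly when
`x` is fully matched and every partner of `x` in the support of `M` is weakly preferred to `y`. Both
conditions pass to any matching `N` that lives on the support of `M` and fully matches every agent
fully matched by `M`, so such an `N` is again ordinally stable. For an integral matching, matched
and fully matched agents coincide.

An integral `N` of this kind comes from Birkhoff's theorem. Putting the missing weight of each agent
on the diagonal makes `M` doubly stochastic, so its support contains a permutation `σ`. Following
`σ` on one side of the bipartition and `σ⁻¹` on the other gives an involution that moves agents only
along support edges; a fully matched agent has zero weight on the diagonal and is therefore moved.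
-/

open Finset
open scoped Classical

variable {V : Type*}

section DiagCompletion

variable {n R : Type*} [Fintype n] [DecidableEq n] [Ring R]

/-- The matrix `M` with the deficiency `1 - ∑ j, M i j` of each row added on the diagonal. It turns
a symmetric matrix with row sums at most one, such as a fractional matching, into a doubly
stochastic one. -/
def diagCompletion (M : Matrix n n R) : Matrix n n R :=
  M + Matrix.diagonal fun i => 1 - ∑ j, M i j

lemma diagCompletion_mem_doublyStochastic [PartialOrder R] [IsOrderedRing R] {M : Matrix n n R}
    (hsymm : M.IsSymm) (hnonneg : ∀ i j, 0 ≤ M i j) (hrow : ∀ i, ∑ j, M i j ≤ 1) :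
    diagCompletion M ∈ doublyStochastic R n := by
  have hcol (j : n) : ∑ i, M i j = ∑ i, M j i := sum_congr rfl fun i _ => hsymm.apply j i
  refine mem_doublyStochastic_iff_sum.2 ⟨fun i j => add_nonneg (hnonneg i j) ?_, fun i => ?_,
    fun j => ?_⟩
  · rw [Matrix.diagonal_apply]
    split_ifs
    exacts [sub_nonneg.2 (hrow i), le_rfl]
  · simp [diagCompletion, Matrix.diagonal_apply, sum_add_distrib]
  · simp [diagCompletion, Matrix.diagonal_apply, sum_add_distrib, hcol]

end DiagCompletion

section Support

variable {n R : Type*} [Fintype n] [Field R] [LinearOrder R] [IsStrictOrderedRing R]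

lemma exists_perm_forall_pos_of_mem_doublyStochastic [DecidableEq n] {M : Matrix n n R}
    (hM : M ∈ doublyStochastic R n) : ∃ σ : Equiv.Perm n, ∀ i, 0 < M i (σ i) := by
  obtain ⟨w, hw_nonneg, hw_sum, rfl⟩ := exists_eq_sum_perm_of_mem_doublyStochastic hM
  obtain ⟨σ, -, hσ⟩ : ∃ σ ∈ univ, 0 < w σ := exists_lt_of_sum_lt (by simp [hw_sum])
  refine ⟨σ, fun i => ?_⟩
  rw [Matrix.sum_apply]
  refine sum_pos' (fun ρ _ => mul_nonneg (hw_nonneg ρ) ?_) ⟨σ, mem_univ σ, ?_⟩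
  · exact nonneg_of_mem_doublyStochastic permMatrix_mem_doublyStochastic
  · simpa [Equiv.toPEquiv_apply] using hσ

lemma exists_perm_in_support_of_isSymm {M : Matrix n n R} (hsymm : M.IsSymm)
    (hnonneg : ∀ i j, 0 ≤ M i j) (hrow : ∀ i, ∑ j, M i j ≤ 1) :
    ∃ σ : Equiv.Perm n, (∀ i, σ i ≠ i → 0 < M i (σ i)) ∧
      ∀ i, ∑ j, M i j = 1 → 0 < M i (σ i) := by
  obtain ⟨σ, hσ⟩ := exists_perm_forall_pos_of_mem_doublyStochastic
    (diagCompletion_mem_doublyStochastic hsymm hnonneg hrow)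
  refine ⟨σ, fun i hmoved => ?_, fun i hfull => ?_⟩
  · simpa [diagCompletion, Matrix.diagonal_apply, hmoved.symm] using hσ i
  · simpa [diagCompletion, Matrix.diagonal_apply, hfull] using hσ i

lemma exists_involutive_in_support_of_bipartite {M : Matrix n n R} {U : Set n}
    (hU : ∀ i j, 0 < M i j → (i ∈ U ↔ j ∉ U)) (hsymm : M.IsSymm)
    (hnonneg : ∀ i j, 0 ≤ M i j) (hrow : ∀ i, ∑ j, M i j ≤ 1) :
    ∃ f : n → n, f.Involutive ∧ (∀ i, f i ≠ i → 0 < M i (f i)) ∧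
      ∀ i, ∑ j, M i j = 1 → f i ≠ i := by
  obtain ⟨σ, hmoved, hfull⟩ := exists_perm_in_support_of_isSymm hsymm hnonneg hrow
  let f : n → n := fun i => if i ∈ U then σ i else σ.symm i
  have hf_of_mem {i : n} (hi : i ∈ U) : f i = σ i := if_pos hi
  have hf_of_notMem {i : n} (hi : i ∉ U) : f i = σ.symm i := if_neg hi
  have hf_pos (i : n) (hi : f i ≠ i) : 0 < M i (f i) := by
    by_cases hiU : i ∈ U
    · rw [hf_of_mem hiU] at hi ⊢
      exact hmoved i hi
    · rw [hf_of_notMem hiU] at hi ⊢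
      simpa [hsymm.apply] using hmoved (σ.symm i) (by simpa using hi.symm)
  refine ⟨f, fun i => ?_, hf_pos, fun i hi hfix => ?_⟩
  · by_cases hi : f i = i
    · rw [hi, hi]
    · have hside := hU i (f i) (hf_pos i hi)
      by_cases hiU : i ∈ U
      · rw [hf_of_notMem (hside.1 hiU), hf_of_mem hiU, σ.symm_apply_apply]
      · rw [hf_of_mem (not_not.1 (mt hside.2 hiU)), hf_of_notMem hiU, σ.apply_symm_apply]
  · have hσ_fix : σ i = i := by
      by_cases hiU : i ∈ U
      · rwa [hf_of_mem hiU] at hfix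
      · rwa [hf_of_notMem hiU, σ.symm_apply_eq, eq_comm] at hfix
    have hdiag : 0 < M i i := by simpa [hσ_fix] using hfull i hi
    exact iff_not_self (hU i i hdiag)

end Support

section InvolutionMatching

variable {f : V → V}

/-- The integral matching that pairs every `v` moved by `f` with `f v`, as a `0`-`1` matrix. It is
meant for involutions `f`; agents fixed by `f` stay unmatched. -/
noncomputable def involutionMatching (f : V → V) (u v : V) : ℝ :=
  if u ≠ v ∧ f u = v then 1 else 0

lemma involutionMatching_integral (f : V → V) : IntegralMatching (involutionMatching f) :=
  fun _ _ => (ite_eq_or_eq _ _ _).symm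

lemma involutionMatching_pos_iff {u v : V} :
    0 < involutionMatching f u v ↔ u ≠ v ∧ f u = v := by
  unfold involutionMatching
  split_ifs with h <;> simp [h]

lemma sum_involutionMatching [Fintype V] (f : V → V) (v : V) :
    ∑ u, involutionMatching f v u = if f v = v then 0 else 1 := by
  have hterm (u : V) :
      involutionMatching f v u = if f v = u then if f v = v then 0 else 1 else 0 := by
    unfold involutionMatching
    grind
  simp only [hterm, sum_ite_eq, mem_univ, if_true]

lemma involutionMatching_isMatching [Fintype V] {sat : V → V → ℚ} (hf : f.Involutive)
    (hadj : ∀ v, f v ≠ v → Adj sat v (f v)) : IsMatching sat (involutionMatching f) where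
  symm u v := by simp only [involutionMatching, ne_comm (a := u), hf.eq_iff, eq_comm (a := u)]
  nonneg u v := by rcases involutionMatching_integral f u v with h | h <;> simp [h]
  support u v huv := if_neg fun ⟨hne, hfu⟩ => huv (hfu ▸ hadj u (hfu ▸ hne.symm))
  degree_le_one v := by
    rw [sum_involutionMatching]
    split_ifs <;> norm_num

end InvolutionMatching

section Matching

variable [Fintype V] {sat : V → V → ℚ} {M N : V → V → ℝ}

lemma IsMatching.adj_of_pos (hM : IsMatching sat M) {u v : V} (h : 0 < M u v) : Adj sat u v :=
  not_imp_comm.1 (hM.support u v) h.ne'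

theorem IsMatching.exists_integral_in_support (hM : IsMatching sat M) {U : Set V}
    (hU : BipartiteWith sat U) :
    ∃ N : V → V → ℝ, IsMatching sat N ∧ IntegralMatching N ∧ (∀ u v, 0 < N u v → 0 < M u v) ∧
      ∀ v, ∑ u, M v u = 1 → ∑ u, N v u = 1 := by
  obtain ⟨f, hf, hpos, hmoved⟩ := exists_involutive_in_support_of_bipartite (M := M)
    (fun u v h => hU u v (hM.adj_of_pos h)) (.ext fun u v => hM.symm v u) hM.nonneg
    hM.degree_le_one
  refine ⟨involutionMatching f,
    involutionMatching_isMatching hf fun v hv => hM.adj_of_pos (hpos v hv),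
    involutionMatching_integral f, fun u v huv => ?_, fun v hv => ?_⟩
  · obtain ⟨hne, rfl⟩ := involutionMatching_pos_iff.1 huv
    exact hpos u hne.symm
  · rw [sum_involutionMatching, if_neg (hmoved v hv)]

lemma IsMatching.one_le_wge_iff (hM : IsMatching sat M) {x y : V} :
    1 ≤ wge sat M x y ↔ ∑ z, M x z = 1 ∧ ∀ z, 0 < M x z → sat x y ≤ sat x z := by
  refine ⟨fun h => ?_, fun ⟨hfull, hpref⟩ => ?_⟩
  · have hsub : wge sat M x y ≤ ∑ z, M x z :=
      sum_le_univ_sum_of_nonneg (hM.nonneg x)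
    have hfull : ∑ z, M x z = 1 := (hM.degree_le_one x).antisymm (h.trans hsub)
    refine ⟨hfull, fun z hz => ?_⟩
    by_contra hworse
    have hlt : wge sat M x y < ∑ z, M x z :=
      sum_lt_sum_of_subset (subset_univ _) (mem_univ z) (by simp [hworse]) hz
        fun u _ _ => hM.nonneg x u
    exact (h.trans_lt hlt).ne' hfull
  · refine (hfull.symm.trans (sum_filter_of_ne fun z _ hz => ?_).symm).le
    have hz_pos : 0 < M x z := (hM.nonneg x z).lt_of_ne' hz
    exact ⟨hM.adj_of_pos hz_pos, hpref z hz_pos⟩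

theorem OrdStable.of_support_subset (hstab : OrdStable sat M) (hM : IsMatching sat M)
    (hN : IsMatching sat N) (hsupp : ∀ u v, 0 < N u v → 0 < M u v)
    (hfull : ∀ v, ∑ u, M v u = 1 → ∑ u, N v u = 1) : OrdStable sat N := by
  have hwge (x y : V) (h : wge sat N x y < 1) : wge sat M x y < 1 := by
    contrapose! h
    obtain ⟨hx, hpref⟩ := hM.one_le_wge_iff.1 h
    exact hN.one_le_wge_iff.2 ⟨hfull x hx, fun z hz => hpref z (hsupp x z hz)⟩
  exact fun u v huv ⟨hu, hv⟩ => hstab u v huv ⟨hwge u v hu, hwge v u hv⟩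

lemma IsMatching.degree_pos_iff_of_integral (hN : IsMatching sat N) (hint : IntegralMatching N)
    {v : V} : 0 < ∑ u, N v u ↔ ∑ u, N v u = 1 := by
  refine ⟨fun h => (hN.degree_le_one v).antisymm ?_, fun h => h ▸ one_pos⟩
  obtain ⟨u, -, hu⟩ := exists_ne_zero_of_sum_ne_zero h.ne'
  calc 1 = N v u := ((hint v u).resolve_left hu).symm
    _ ≤ ∑ u, N v u := single_le_sum (fun u _ => hN.nonneg v u) (mem_univ u)

lemma IsMatching.card_matched_eq_nfully (hN : IsMatching sat N) (hint : IntegralMatching N) :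
    #{v | 0 < ∑ u, N v u} = nfully N := by
  simp only [nfully, hN.degree_pos_iff_of_integral hint]

lemma nfully_le_nfully (hfull : ∀ v, ∑ u, M v u = 1 → ∑ u, N v u = 1) : nfully M ≤ nfully N :=
  card_le_card (monotone_filter_right _ fun v _ => hfull v)

end Matching

/-- a bipartite instance (ties allowed) admits an ordinally stable
fractional matching with at least `τ` fully matched agents iff it admits a stable
integral matching in which at least `τ` agents are matched. -/
theorem exists_ordinallyStable_fully_iff_exists_stable_integral [Fintype V]
    (sat : V → V → ℚ) (hinst : IsInstance sat)
    (hbip : ∃ U : Set V, BipartiteWith sat U) (τ : ℕ) :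
    (∃ M : V → V → ℝ, IsMatching sat M ∧ OrdStable sat M ∧ τ ≤ nfully M) ↔
    (∃ N : V → V → ℝ, IsMatching sat N ∧ IntegralMatching N ∧ OrdStable sat N ∧
      τ ≤ (Finset.univ.filter (fun v => 0 < ∑ u, N v u)).card) := by
  obtain ⟨U, hU⟩ := hbip
  constructor
  · rintro ⟨M, hM, hstab, hτ⟩
    obtain ⟨N, hN, hint, hsupp, hfull⟩ := hM.exists_integral_in_support hU
    refine ⟨N, hN, hint, hstab.of_support_subset hM hN hsupp hfull, ?_⟩
    rw [hN.card_matched_eq_nfully hint]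
    exact hτ.trans (nfully_le_nfully hfull)
  · rintro ⟨N, hN, hint, hstab, hτ⟩
    exact ⟨N, hN, hstab, hN.card_matched_eq_nfully hint ▸ hτ⟩
end

section
/- Let (G, sat) be an instance with strict cardinal preferences and let M be an ordinally stable fractional matching. Then every agent that is matched under M is fully matched under M; hence an agent is matched under M if and only if it is fully matched under M. -/
open Finset
open scoped Classical

variable {V : Type*}

/-!
Call an agent *fractional* if it has an edge of weight strictly between `0` and `1`. A matched agent
that is not fully matched is fractional, so it suffices that fractional agents are fully matched.

Call `v` *saturated at* `u` if `M v u > 0` and `M(v, ≽ u) = 1`; under strict preferences this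
determines `u`, the worst partner of `v`. Every fractional agent `v` therefore has a fractional edge
to some `z` at which it is not saturated: otherwise `v` would be fully matched with a single
partner. Stability then makes `z` saturated at `v`, so `v` can be recovered from `z`, and `v ↦ z` is
an injective self-map of the finite set of fractional agents. Being surjective, it shows that every
fractional agent is saturated at some partner, hence fully matched.
-/

/-- Fractional agents: some edge at `v` has weight strictly between `0` and `1`. -/
def HasFractionalEdge (M : V → V → ℝ) (v : V) : Prop :=
  ∃ u, 0 < M v u ∧ M v u < 1

/-- `v` is saturated at its partner `u`: it spends its whole capacity on neighbours it likes at
least as much as `u`. For a matching, `1 ≤ M(v, ≽ u)` amounts to equality. -/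
def IsSaturatedAt [Fintype V] (sat : V → V → ℚ) (M : V → V → ℝ) (v u : V) : Prop :=
  0 < M v u ∧ 1 ≤ wge sat M v u

section

variable [Fintype V] {sat : V → V → ℚ} {M : V → V → ℝ}

namespace IsMatching

theorem adj_of_pos_s14 (hM : IsMatching sat M) {u v : V} (h : 0 < M u v) : Adj sat u v :=
  not_not.1 fun hnot => h.ne' (hM.support u v hnot)

theorem hasFractionalEdge (hM : IsMatching sat M) {v : V} (hpos : 0 < ∑ u, M v u)
    (hlt : ∑ u, M v u < 1) : HasFractionalEdge M v := by
  obtain ⟨u, -, hu⟩ := (Finset.sum_pos_iff_of_nonneg fun u _ => hM.nonneg v u).1 hpos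
  have hle : M v u ≤ ∑ w, M v w :=
    Finset.single_le_sum (fun w _ => hM.nonneg v w) (Finset.mem_univ u)
  exact ⟨u, hu, hle.trans_lt hlt⟩

theorem add_le_one (hM : IsMatching sat M) {v u w : V} (huw : u ≠ w) : M v u + M v w ≤ 1 :=
  (Finset.add_le_sum (fun z _ => hM.nonneg v z) (Finset.mem_univ u) (Finset.mem_univ w) huw).trans
    (hM.degree_le_one v)

end IsMatching

theorem StrictPrefs.injOn_partners (hstrict : StrictPrefs sat) (hM : IsMatching sat M)
    (v : V) : Set.InjOn (sat v) {u | 0 < M v u} := fun x hx y hy hxy =>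
  not_not.1 fun hne => hstrict v x y (hM.adj_of_pos_s14 hx) (hM.adj_of_pos_s14 hy) hne hxy

namespace IsSaturatedAt

theorem sum_eq_one {v u : V} (h : IsSaturatedAt sat M v u) (hM : IsMatching sat M) :
    ∑ w, M v w = 1 :=
  (hM.degree_le_one v).antisymm <| h.2.trans <|
    Finset.sum_le_sum_of_subset_of_nonneg (Finset.filter_subset _ _) fun w _ _ => hM.nonneg v w

theorem sat_le {v u w : V} (h : IsSaturatedAt sat M v u) (hM : IsMatching sat M)
    (hw : 0 < M v w) : sat v u ≤ sat v w := by
  by_contra! hlt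
  have hwge : wge sat M v u < ∑ z, M v z :=
    Finset.sum_lt_sum_of_subset (Finset.filter_subset _ _) (Finset.mem_univ w) (by simp [hlt]) hw
      fun z _ _ => hM.nonneg v z
  exact (hwge.trans_le (hM.degree_le_one v)).not_ge h.2

theorem unique {v u w : V} (hu : IsSaturatedAt sat M v u) (hw : IsSaturatedAt sat M v w)
    (hM : IsMatching sat M) (hstrict : Set.InjOn (sat v) {z | 0 < M v z}) : u = w :=
  hstrict hu.1 hw.1 ((hu.sat_le hM hw.1).antisymm (hw.sat_le hM hu.1))

end IsSaturatedAt

namespace HasFractionalEdge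

theorem exists_not_isSaturatedAt {v : V} (hv : HasFractionalEdge M v) (hM : IsMatching sat M)
    (hstrict : Set.InjOn (sat v) {z | 0 < M v z}) :
    ∃ z, 0 < M v z ∧ M v z < 1 ∧ ¬ IsSaturatedAt sat M v z := by
  by_contra! hsat
  obtain ⟨u, hu_pos, hu_lt⟩ := hv
  have hu_sat := hsat u hu_pos hu_lt
  obtain ⟨w, hw_ne, hw_pos⟩ : ∃ w ≠ u, 0 < M v w := by
    by_contra! honly
    have hsum : ∑ w, M v w = M v u :=
      Fintype.sum_eq_single u fun w hw => (honly w hw).antisymm (hM.nonneg v w)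
    exact hu_lt.ne (hsum.symm.trans (hu_sat.sum_eq_one hM))
  have hw_lt : M v w < 1 := by linarith [hM.add_le_one (v := v) hw_ne]
  exact hw_ne ((hsat w hw_pos hw_lt).unique hu_sat hM hstrict)

theorem exists_isSaturatedAt {x : V} (hx : HasFractionalEdge M x) (hM : IsMatching sat M)
    (hstrict : ∀ v, Set.InjOn (sat v) {u | 0 < M v u})
    (hstable : ∀ u v, 0 < M u v → ¬ (wge sat M u v < 1 ∧ wge sat M v u < 1)) :
    ∃ v, IsSaturatedAt sat M x v := by
  have hnext : ∀ v : {v // HasFractionalEdge M v}, ∃ z : {v // HasFractionalEdge M v},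
      IsSaturatedAt sat M z v := by
    rintro ⟨v, hv⟩
    obtain ⟨z, hz_pos, hz_lt, hz_sat⟩ := hv.exists_not_isSaturatedAt hM (hstrict v)
    have hvz : wge sat M v z < 1 := not_le.1 fun h => hz_sat ⟨hz_pos, h⟩
    have hzv : 1 ≤ wge sat M z v := not_lt.1 fun h => hstable v z hz_pos ⟨hvz, h⟩
    rw [hM.symm v z] at hz_pos hz_lt
    exact ⟨⟨z, v, hz_pos, hz_lt⟩, hz_pos, hzv⟩
  choose next hsat using hnext
  have hinj : Function.Injective next := fun v w hvw =>
    Subtype.ext ((hsat v).unique (hvw ▸ hsat w) hM (hstrict _))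
  obtain ⟨v, hv⟩ := Finite.surjective_of_injective hinj ⟨x, hx⟩
  exact ⟨v, by simpa only [hv] using hsat v⟩

end HasFractionalEdge

theorem matched_iff_fullyMatched_of_ordinallyStable_general (hM : IsMatching sat M)
    (hstrict : ∀ v, Set.InjOn (sat v) {u | 0 < M v u})
    (hstable : ∀ u v, 0 < M u v → ¬ (wge sat M u v < 1 ∧ wge sat M v u < 1)) (v : V) :
    0 < ∑ u, M v u ↔ ∑ u, M v u = 1 := by
  refine ⟨fun hpos => ?_, fun hfull => hfull ▸ one_pos⟩
  by_contra hne
  have hfrac := hM.hasFractionalEdge hpos ((hM.degree_le_one v).lt_of_ne hne)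
  obtain ⟨u, hu⟩ := hfrac.exists_isSaturatedAt hM hstrict hstable
  exact hne (hu.sum_eq_one hM)

end

/-- under strict preferences, every agent matched in an ordinally stable
fractional matching is fully matched; hence matched and fully matched coincide. -/
theorem matched_iff_fullyMatched_of_ordinallyStable [Fintype V]
    (sat : V → V → ℚ) (hinst : IsInstance sat) (hstrict : StrictPrefs sat)
    (M : V → V → ℝ) (hM : IsMatching sat M) (hOS : OrdStable sat M) :
    (∀ v, 0 < ∑ u, M v u → ∑ u, M v u = 1) ∧
    (∀ v, 0 < ∑ u, M v u ↔ ∑ u, M v u = 1) := by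
  have key := matched_iff_fullyMatched_of_ordinallyStable_general hM
    (hstrict.injOn_partners hM) fun u v huv => hOS u v (hM.adj_of_pos_s14 huv)
  exact ⟨fun v => (key v).1, key⟩
end
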